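/- arXiv:math/0209130 — 2 statements merged into one kernel-verified Lean document; each statement's English description precedes it below -/
import Mathlib

section
/- Let Γ₀ be a countable discrete group acting on ℤ² via a homomorphism into SL(2,ℤ), with induced action σ̂ on 𝕋² = ẑ², and suppose the action of Γ₀ on ℤ² \ {0} has all orbits infinite. Then the measure-preserving action σ̂ of Γ₀ on (𝕋², Haar) is free and weakly mixing. In particular this holds for Γ₀ = SL(2,ℤ) itself and for any finite-index subgroup Γ₁ ⊂ SL(2,ℤ). -/
open MeasureTheory

/-!
A group is never a finite union of cosets of subgroups of infinite index (B. H. Neumann), so along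
a suitable filter on the group all points with infinite orbit leave every finite set
simultaneously. On `L²` of the torus, a matrix `A` moves the Fourier characters by `n ↦ n ᵥ* A`;
hence along such a filter the matrix coefficients of the Koopman operators between characters tend
to those of the projection onto the constants, and by density of the trigonometric polynomials so
do all matrix coefficients. Freeness holds because the fixed points of `A ≠ 1` lie in the kernel of
a nontrivial character. In dimension two, a quarter turn conjugates the action on row vectors to
the inverse of the action on column vectors, so orbits of both kinds are infinite together.
-/

section OrbitEscape

open Filter
open scoped Matrix Pointwise

variable {G X : Type*} [Group G] [MulAction G X]

theorem exists_forall_smul_eq_mem_leftCoset_stabilizer (x y : X) :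
    ∃ c : G, ∀ g : G, g • x = y → g ∈ c • (MulAction.stabilizer G x : Set G) := by
  by_cases h : ∃ c : G, c • x = y
  · obtain ⟨c, rfl⟩ := h
    refine ⟨c, fun g hg ↦ (mem_leftCoset_iff _).2 ?_⟩
    rw [SetLike.mem_coe, MulAction.mem_stabilizer_iff, mul_smul, hg, inv_smul_smul]
  · exact ⟨1, fun g hg ↦ (h ⟨g, hg⟩).elim⟩

theorem exists_forall_smul_ne {S : Finset X} (hS : ∀ x ∈ S, (MulAction.orbit G x).Infinite)
    (T : Finset X) : ∃ g : G, ∀ x ∈ S, ∀ y ∈ T, g • x ≠ y := by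
  by_contra! hcontra
  choose c hc using exists_forall_smul_eq_mem_leftCoset_stabilizer (G := G) (X := X)
  have hcover : ⋃ p ∈ S ×ˢ T, c p.1 p.2 • (MulAction.stabilizer G p.1 : Set G) = Set.univ := by
    refine Set.eq_univ_of_forall fun g ↦ ?_
    obtain ⟨x, hx, y, hy, hxy⟩ := hcontra g
    exact Set.mem_biUnion (Finset.mk_mem_product hx hy) (hc x y g hxy)
  obtain ⟨p, hp, hfinite⟩ := Subgroup.exists_finiteIndex_of_leftCoset_cover hcover
  apply hfinite.index_ne_zero
  rw [MulAction.index_stabilizer]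
  exact (hS p.1 (Finset.mem_product.1 hp).1).ncard

variable (G X) in
theorem exists_neBot_tendsto_smul_cofinite :
    ∃ l : Filter G, l.NeBot ∧
      ∀ x : X, (MulAction.orbit G x).Infinite → Tendsto (· • x) l cofinite := by
  classical
  choose γ hγ using fun S : Finset X ↦ exists_forall_smul_ne (G := G)
    (S := S.filter fun x ↦ (MulAction.orbit G x).Infinite) (by simp) S
  refine ⟨map γ atTop, inferInstance, fun x hx ↦ tendsto_map'_iff.2 ?_⟩
  refine le_cofinite_iff_eventually_ne.2 fun y ↦ eventually_map.2 ?_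
  filter_upwards [eventually_ge_atTop {x, y}] with S hS
  rw [Finset.insert_subset_iff, Finset.singleton_subset_iff] at hS
  exact hγ S x (Finset.mem_filter.2 ⟨hS.1, hx⟩) y hS.2

theorem exists_neBot_tendsto_vecMul_cofinite {Γ R d : Type*} [Group Γ] [Semiring R] [Fintype d]
    [DecidableEq d] (ρ : Γ →* Matrix d d R) :
    ∃ l : Filter Γ, l.NeBot ∧ ∀ v : d → R,
      (Set.range fun g ↦ v ᵥ* ρ g).Infinite → Tendsto (v ᵥ* ρ ·) l cofinite := by
  let _ : MulAction Γᵐᵒᵖ (d → R) := MulAction.compHom _ ρ.op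
  obtain ⟨l, hne, hl⟩ := exists_neBot_tendsto_smul_cofinite Γᵐᵒᵖ (d → R)
  refine ⟨l.map MulOpposite.unop, inferInstance, fun v hv ↦ tendsto_map'_iff.2 (hl v ?_)⟩
  have horbit : MulAction.orbit Γᵐᵒᵖ v = Set.range fun g ↦ v ᵥ* ρ g :=
    MulOpposite.opEquiv.symm.surjective.range_comp fun g ↦ v ᵥ* ρ g
  rwa [horbit]

end OrbitEscape

section DenseSpan

open Filter Topology
open scoped InnerProductSpace

variable {𝕜 E F H α : Type*} [RCLike 𝕜] {l : Filter α}

theorem tendsto_apply_of_span_dense [NormedAddCommGroup E] [NormedSpace 𝕜 E]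
    [NormedAddCommGroup F] [NormedSpace 𝕜 F] {T : α → E →L[𝕜] F} {T₀ : E →L[𝕜] F} {C : ℝ}
    (hT : ∀ a, ‖T a‖ ≤ C) {s : Set E} (hs : (Submodule.span 𝕜 s).topologicalClosure = ⊤)
    (hlim : ∀ x ∈ s, Tendsto (T · x) l (𝓝 (T₀ x))) (x : E) :
    Tendsto (T · x) l (𝓝 (T₀ x)) := by
  have hequi : Equicontinuous ((↑) ∘ T : α → E → F) :=
    ((NormedSpace.equicontinuous_TFAE T).out 5 1).mp (⟨C, hT⟩ : ∃ C, ∀ a, ‖T a‖ ≤ C)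
  have hspan : ∀ y ∈ Submodule.span 𝕜 s, Tendsto (T · y) l (𝓝 (T₀ y)) := by
    intro y hy
    induction hy using Submodule.span_induction with
    | mem y hy => exact hlim y hy
    | zero => simpa using tendsto_const_nhds
    | add y z _ _ hy hz => simpa using hy.add hz
    | smul c y _ hy => simpa using hy.const_smul c
  have hx : x ∈ closure (Submodule.span 𝕜 s : Set E) := by
    rw [← Submodule.topologicalClosure_coe, hs]
    trivial
  exact (hequi.isClosed_setOfPred_tendsto T₀.continuous).closure_subset_iff.2 hspan hx

theorem tendsto_inner_apply_of_span_dense [NormedAddCommGroup H] [InnerProductSpace 𝕜 H]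
    {T : α → H →L[𝕜] H} {T₀ : H →L[𝕜] H} {C : ℝ} (hT : ∀ a, ‖T a‖ ≤ C) {s : Set H}
    (hs : (Submodule.span 𝕜 s).topologicalClosure = ⊤)
    (hlim : ∀ x ∈ s, ∀ y ∈ s, Tendsto (fun a ↦ ⟪x, T a y⟫_𝕜) l (𝓝 ⟪x, T₀ y⟫_𝕜)) (x y : H) :
    Tendsto (fun a ↦ ⟪x, T a y⟫_𝕜) l (𝓝 ⟪x, T₀ y⟫_𝕜) := by
  have hright : ∀ x ∈ s, Tendsto (fun a ↦ ⟪x, T a y⟫_𝕜) l (𝓝 ⟪x, T₀ y⟫_𝕜) := fun x hx ↦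
    tendsto_apply_of_span_dense (T := fun a ↦ innerSL 𝕜 x ∘L T a) (T₀ := innerSL 𝕜 x ∘L T₀)
      (C := ‖x‖ * C)
      (fun a ↦ (ContinuousLinearMap.opNorm_comp_le _ _).trans (by
        rw [innerSL_apply_norm]; gcongr; exact hT a)) hs (hlim x hx) y
  have hleft : Tendsto (fun a ↦ ⟪T a y, x⟫_𝕜) l (𝓝 ⟪T₀ y, x⟫_𝕜) :=
    tendsto_apply_of_span_dense (T := fun a ↦ innerSL 𝕜 (T a y)) (T₀ := innerSL 𝕜 (T₀ y))
      (C := C * ‖y‖)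
      (fun a ↦ by rw [innerSL_apply_norm]; exact (T a).le_of_opNorm_le (hT a) y) hs
      (fun x hx ↦ by
        simpa [Function.comp_def] using (RCLike.continuous_conj.tendsto _).comp (hright x hx)) x
  simpa [Function.comp_def] using (RCLike.continuous_conj.tendsto _).comp hleft

end DenseSpan

section WeakMixing

open Filter Topology
open scoped InnerProductSpace

variable {Γ X : Type*} [MeasurableSpace X] {μ : Measure X}

/-- Weak mixing of a family of transformations of `(X, μ)`: finitely many functions, bounded by `1`,
can be made simultaneously almost uncorrelated by a single member of the family. The functions are
everywhere defined rather than classes modulo null sets, and are paired bilinearly, without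
complex conjugation. -/
def IsWeaklyMixing (T : Γ → X → X) (μ : Measure X) : Prop :=
  ∀ ε : ℝ, 0 < ε → ∀ F : Finset (X → ℂ), (∀ f ∈ F, Measurable f ∧ ∀ x, ‖f x‖ ≤ 1) →
    ∃ g : Γ, ∀ f₁ ∈ F, ∀ f₂ ∈ F,
      ‖(∫ x, f₁ (T g x) * f₂ x ∂μ) - (∫ x, f₁ x ∂μ) * (∫ x, f₂ x ∂μ)‖ ≤ ε

theorem inner_toLp_star_toLp {f h : X → ℂ} (hf : MemLp f 2 μ) (hh : MemLp h 2 μ) :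
    ⟪hf.star.toLp (star f), hh.toLp h⟫_ℂ = ∫ x, h x * f x ∂μ := by
  rw [L2.inner_def]
  refine integral_congr_ae ?_
  filter_upwards [hf.star.coeFn_toLp, hh.coeFn_toLp] with x hfx hhx
  simp [hfx, hhx]

/-- The Koopman operator `f ↦ f ∘ T` on `L²(μ)` of a measure-preserving transformation `T`; weak
mixing is read off from the limits of its matrix coefficients. -/
noncomputable def koopman {T : X → X} (hT : MeasurePreserving T μ μ) : Lp ℂ 2 μ →L[ℂ] Lp ℂ 2 μ :=
  (Lp.compMeasurePreservingₗᵢ ℂ T hT).toContinuousLinearMap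

theorem koopman_toLp {T : X → X} (hT : MeasurePreserving T μ μ) {f : X → ℂ} (hf : MemLp f 2 μ) :
    koopman hT (hf.toLp f) = (hf.comp_measurePreserving hT).toLp (f ∘ T) := rfl

theorem norm_koopman_le {T : X → X} (hT : MeasurePreserving T μ μ) : ‖koopman hT‖ ≤ 1 :=
  LinearIsometry.norm_toContinuousLinearMap_le _

/-- The operator `f ↦ (∫ f) · 1` on `L²(μ)`, which for a probability measure is the orthogonal
projection onto the constants: the limit of the Koopman operators of a weakly mixing action. -/
noncomputable def constProjection (μ : Measure X) [IsFiniteMeasure μ] : Lp ℂ 2 μ →L[ℂ] Lp ℂ 2 μ :=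
  InnerProductSpace.rankOne ℂ (Lp.const 2 μ 1) (Lp.const 2 μ 1)

theorem inner_constProjection_toLp [IsFiniteMeasure μ] {f h : X → ℂ} (hf : MemLp f 2 μ)
    (hh : MemLp h 2 μ) :
    ⟪hf.star.toLp (star f), constProjection μ (hh.toLp h)⟫_ℂ = (∫ x, h x ∂μ) * ∫ x, f x ∂μ := by
  have hone : MemLp (1 : X → ℂ) 2 μ := memLp_const 1
  have hconst : Lp.const 2 μ (1 : ℂ) = hone.toLp 1 := rfl
  have hconst_star : Lp.const 2 μ (1 : ℂ) = hone.star.toLp (star 1) := by simp [hconst]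
  rw [constProjection, InnerProductSpace.rankOne_apply, inner_smul_right]
  nth_rw 1 [hconst_star]
  rw [hconst, inner_toLp_star_toLp hone hh, inner_toLp_star_toLp hf hone]
  simp

theorem isWeaklyMixing_of_tendsto_koopman [IsFiniteMeasure μ] {T : Γ → X → X}
    (hT : ∀ g, MeasurePreserving (T g) μ μ) {l : Filter Γ} [l.NeBot]
    (hlim : ∀ f h : Lp ℂ 2 μ,
      Tendsto (fun g ↦ ⟪f, koopman (hT g) h⟫_ℂ) l (𝓝 ⟪f, constProjection μ h⟫_ℂ)) :
    IsWeaklyMixing T μ := by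
  intro ε hε F hF
  have hmem (f) (hf : f ∈ F) : MemLp f 2 μ :=
    .of_bound (hF f hf).1.aestronglyMeasurable 1 (.of_forall (hF f hf).2)
  have hclose : ∀ f₁ ∈ F, ∀ f₂ ∈ F, ∀ᶠ g in l,
      ‖(∫ x, f₁ (T g x) * f₂ x ∂μ) - (∫ x, f₁ x ∂μ) * (∫ x, f₂ x ∂μ)‖ ≤ ε := by
    intro f₁ h₁ f₂ h₂
    have h := hlim ((hmem f₂ h₂).star.toLp _) ((hmem f₁ h₁).toLp _)
    simp only [koopman_toLp, inner_constProjection_toLp (hmem f₂ h₂),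
      inner_toLp_star_toLp (hmem f₂ h₂)] at h
    filter_upwards [h.eventually (Metric.closedBall_mem_nhds _ hε)] with g hg
    simpa [dist_eq_norm] using hg
  have hall : ∀ᶠ g in l, ∀ f₁ ∈ F, ∀ f₂ ∈ F,
      ‖(∫ x, f₁ (T g x) * f₂ x ∂μ) - (∫ x, f₁ x ∂μ) * (∫ x, f₂ x ∂μ)‖ ≤ ε :=
    (Finset.eventually_all _).2 fun f₁ h₁ ↦ (Finset.eventually_all _).2 (hclose f₁ h₁)
  exact hall.exists

end WeakMixing

section IntegerMatrices

open scoped Matrix Matrix.Module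

variable {d M : Type*} [Fintype d] [AddCommGroup M]

theorem surjective_sum_zsmul [DivisibleBy M ℤ] {n : d → ℤ} (hn : n ≠ 0) :
    Function.Surjective fun x : d → M ↦ ∑ j, n j • x j := by
  classical
  intro y
  obtain ⟨i, hi⟩ := Function.ne_iff.1 hn
  refine ⟨Pi.single i (DivisibleBy.div y (n i)), ?_⟩
  simpa [Pi.single_apply, smul_ite] using DivisibleBy.div_cancel y hi

variable [DecidableEq d]

theorem surjective_matrix_smul [DivisibleBy M ℤ] {A : Matrix d d ℤ} (hA : A.det ≠ 0) :
    Function.Surjective fun x : d → M ↦ A • x := by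
  intro y
  refine ⟨A.adjugate • fun i ↦ DivisibleBy.div (y i) A.det, ?_⟩
  ext i
  dsimp only
  rw [← mul_smul, Matrix.mul_adjugate, smul_assoc, one_smul]
  exact DivisibleBy.div_cancel (y i) hA

theorem sum_zsmul_matrix_smul (A : Matrix d d ℤ) (n : d → ℤ) (x : d → M) :
    ∑ i, n i • (A • x) i = ∑ j, (n ᵥ* A) j • x j := by
  simp only [Matrix.Module.smul_apply, Matrix.vecMul, dotProduct, Finset.smul_sum,
    Finset.sum_smul, mul_smul]
  exact Finset.sum_comm

end IntegerMatrices

section Torus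

open Filter Topology UnitAddTorus
open scoped Matrix Matrix.Module InnerProductSpace

variable {d : Type*} [Fintype d]

theorem volume_unitAddTorus_eq_pi_haarAddCircle :
    (volume : Measure (UnitAddTorus d)) = Measure.pi fun _ ↦ AddCircle.haarAddCircle := by
  simp [volume_pi, AddCircle.volume_eq_smul_haarAddCircle]

instance isProbabilityMeasure_volume_unitAddCircle :
    IsProbabilityMeasure (volume : Measure UnitAddCircle) :=
  ⟨by simp⟩

theorem volume_singleton_zero_unitAddCircle : volume ({0} : Set UnitAddCircle) = 0 := by
  simpa using AddCircle.volume_closedBall (T := 1) (x := 0) 0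

theorem measurePreserving_sum_zsmul {n : d → ℤ} (hn : n ≠ 0) :
    MeasurePreserving (fun x : UnitAddTorus d ↦ ∑ j, n j • x j) volume volume := by
  let φ : UnitAddTorus d →+ UnitAddCircle := ∑ j, n j • Pi.evalAddMonoidHom _ j
  have hφ : ⇑φ = fun x ↦ ∑ j, n j • x j := by ext x; simp [φ]
  rw [← hφ]
  exact φ.measurePreserving (by rw [hφ]; fun_prop) (hφ ▸ surjective_sum_zsmul hn) (by simp)

theorem toCircle_sum {T : ℝ} {ι : Type*} (s : Finset ι) (f : ι → AddCircle T) :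
    AddCircle.toCircle (∑ i ∈ s, f i) = ∏ i ∈ s, AddCircle.toCircle (f i) :=
  map_sum (AddCircle.toCircle_addChar.toAddMonoidHom) f s

theorem mFourier_eq_toCircle_sum (n : d → ℤ) (x : UnitAddTorus d) :
    mFourier n x = AddCircle.toCircle (∑ j, n j • x j) := by
  simp only [mFourier, ContinuousMap.coe_mk, fourier_apply, toCircle_sum]
  exact (map_prod Circle.coeHom _ _).symm

theorem constProjection_mFourierLp (n : d → ℤ) :
    constProjection (Measure.pi fun _ : d ↦ AddCircle.haarAddCircle) (mFourierLp 2 n) =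
      if n = 0 then mFourierLp 2 0 else 0 := by
  have hone : Lp.const 2 (Measure.pi fun _ : d ↦ AddCircle.haarAddCircle) (1 : ℂ) =
      mFourierLp 2 0 := by
    rw [mFourierLp, mFourier_zero]
    rfl
  rw [constProjection, InnerProductSpace.rankOne_apply, hone,
    orthonormal_iff_ite.1 orthonormal_mFourier]
  simp [eq_comm]

theorem tendsto_inner_mFourierLp {α : Type*} {l : Filter α} {n : α → d → ℤ}
    (hn : Tendsto n l cofinite) (m : d → ℤ) :
    Tendsto (fun a ↦ ⟪mFourierLp 2 m, mFourierLp 2 (n a)⟫_ℂ) l (𝓝 0) := by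
  refine tendsto_const_nhds.congr' ?_
  filter_upwards [le_cofinite_iff_eventually_ne.1 hn m] with a ha
  rw [orthonormal_mFourier.inner_eq_zero (Ne.symm ha)]

variable [DecidableEq d]

theorem mFourier_matrix_smul (n : d → ℤ) (A : Matrix d d ℤ) (x : UnitAddTorus d) :
    mFourier n (A • x) = mFourier (n ᵥ* A) x := by
  rw [mFourier_eq_toCircle_sum, mFourier_eq_toCircle_sum, sum_zsmul_matrix_smul]

theorem measurePreserving_matrix_smul {A : Matrix d d ℤ} (hA : A.det ≠ 0) :
    MeasurePreserving (fun x : UnitAddTorus d ↦ A • x) volume volume := by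
  have hcont : Continuous fun x : UnitAddTorus d ↦ A • x :=
    continuous_pi fun i ↦ by simp only [Matrix.Module.smul_apply]; fun_prop
  exact (DistribSMul.toAddMonoidHom (UnitAddTorus d) A).measurePreserving hcont
    (surjective_matrix_smul hA) rfl

theorem volume_setOf_matrix_smul_eq {A B : Matrix d d ℤ} (hAB : A ≠ B) :
    volume {x : UnitAddTorus d | A • x = B • x} = 0 := by
  obtain ⟨i, hi⟩ := Function.ne_iff.1 hAB
  have hnull : volume ((fun x : UnitAddTorus d ↦ ∑ j, (A i - B i) j • x j) ⁻¹' {0}) = 0 := by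
    rw [(measurePreserving_sum_zsmul (sub_ne_zero.2 hi)).measure_preimage
      (measurableSet_singleton 0).nullMeasurableSet, volume_singleton_zero_unitAddCircle]
  refine measure_mono_null (fun x hx ↦ ?_) hnull
  simpa [sub_smul, sub_eq_zero] using! congrFun hx i

theorem koopman_mFourierLp {A : Matrix d d ℤ}
    (hA : MeasurePreserving (fun x : UnitAddTorus d ↦ A • x)
      (Measure.pi fun _ ↦ AddCircle.haarAddCircle) (Measure.pi fun _ ↦ AddCircle.haarAddCircle))
    (n : d → ℤ) : koopman hA (mFourierLp 2 n) = mFourierLp 2 (n ᵥ* A) := by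
  refine Lp.ext ?_
  filter_upwards [Lp.coeFn_compMeasurePreserving (mFourierLp 2 n) hA,
    hA.quasiMeasurePreserving.ae (coeFn_mFourierLp 2 n),
    coeFn_mFourierLp 2 (n ᵥ* A)] with x hcomp hn hnA
  refine hcomp.trans ?_
  rw [Function.comp_apply, hn, hnA, mFourier_matrix_smul]

theorem isWeaklyMixing_matrix_smul {Γ : Type*} {A : Γ → Matrix d d ℤ} (hA : ∀ g, (A g).det ≠ 0)
    {l : Filter Γ} [l.NeBot] (hl : ∀ n : d → ℤ, n ≠ 0 → Tendsto (n ᵥ* A ·) l cofinite) :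
    IsWeaklyMixing (fun g (x : UnitAddTorus d) ↦ A g • x) volume := by
  have hmp := fun g ↦ measurePreserving_matrix_smul (hA g)
  rw [volume_unitAddTorus_eq_pi_haarAddCircle] at hmp ⊢
  refine isWeaklyMixing_of_tendsto_koopman hmp (l := l)
    (tendsto_inner_apply_of_span_dense (fun g ↦ norm_koopman_le _)
      (span_mFourierLp_closure_eq_top (by simp)) ?_)
  rintro _ ⟨m, rfl⟩ _ ⟨n, rfl⟩
  simp only [koopman_mFourierLp, constProjection_mFourierLp]
  obtain rfl | hn := eq_or_ne n 0
  · simp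
  · simpa [hn] using tendsto_inner_mFourierLp (hl n hn) m

end Torus

section SpecialLinearGroup

open scoped Matrix MatrixGroups

variable {R : Type*} [CommRing R]

theorem mulVec_vecMul_eq_inv_mulVec_mulVec (A : SL(2, R)) (v : Fin 2 → R) :
    !![0, -1; 1, 0] *ᵥ (v ᵥ* A.1) = A⁻¹.1 *ᵥ (!![0, -1; 1, 0] *ᵥ v) := by
  ext i
  fin_cases i <;>
    simp [Matrix.SpecialLinearGroup.coe_inv, Matrix.adjugate_fin_two, Matrix.mulVec,
      Matrix.vecMul, dotProduct, Fin.sum_univ_two] <;> ring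

theorem infinite_range_vecMul_of_infinite_mulVec {Γ : Type*} [Group Γ] {ρ : Γ →* SL(2, R)}
    (horb : ∀ v : Fin 2 → R, v ≠ 0 → {w | ∃ g, w = (ρ g).1 *ᵥ v}.Infinite)
    {v : Fin 2 → R} (hv : v ≠ 0) : (Set.range fun g ↦ v ᵥ* (ρ g).1).Infinite := by
  have hrot : !![0, -1; 1, 0] *ᵥ v ≠ 0 := by
    intro hzero
    apply hv
    ext i
    fin_cases i
    · simpa [Matrix.mulVec, dotProduct] using congrFun hzero 1
    · simpa [Matrix.mulVec, dotProduct] using congrFun hzero 0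
  refine Set.Infinite.of_image (!![0, -1; 1, 0] *ᵥ ·) ((horb _ hrot).mono ?_)
  rintro _ ⟨g, rfl⟩
  refine ⟨_, ⟨g⁻¹, rfl⟩, ?_⟩
  dsimp only
  rw [mulVec_vecMul_eq_inv_mulVec_mulVec, map_inv, inv_inv]

end SpecialLinearGroup

section MatrixGroups

open scoped Matrix Matrix.Module

theorem stmt13_general {Γ d : Type*} [Group Γ] [Fintype d] [DecidableEq d]
    (ρ : Γ →* Matrix d d ℤ) (hinj : Function.Injective ρ)
    (horb : ∀ n : d → ℤ, n ≠ 0 → (Set.range fun g ↦ n ᵥ* ρ g).Infinite)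
    (σ : Γ → (d → UnitAddCircle) → (d → UnitAddCircle))
    (hσ : ∀ g x i, σ g x i = ∑ j, ρ g i j • x j) :
    (∀ g, MeasurePreserving (σ g) volume volume) ∧
      (∀ g, g ≠ 1 → volume {x | σ g x = x} = 0) ∧ IsWeaklyMixing σ volume := by
  obtain rfl : σ = fun g x ↦ ρ g • x := by
    ext g x i
    exact hσ g x i
  have hdet (g : Γ) : (ρ g).det ≠ 0 :=
    ((Matrix.isUnit_iff_isUnit_det _).1 ((Group.isUnit g).map ρ)).ne_zero
  refine ⟨fun g ↦ measurePreserving_matrix_smul (hdet g), fun g hg ↦ ?_, ?_⟩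
  · simpa only [one_smul] using
      volume_setOf_matrix_smul_eq ((map_ne_one_iff ρ hinj).2 hg)
  · obtain ⟨l, hne, hl⟩ := exists_neBot_tendsto_vecMul_cofinite ρ
    exact isWeaklyMixing_matrix_smul hdet fun n hn ↦ hl n (horb n hn)

end MatrixGroups

/-- let `Γ` act on `ℤ²` via an (injective) homomorphism
`ρ : Γ →* SL(2,ℤ)` such that all orbits on `ℤ² \ {0}` are infinite, and let `σ` be
the induced action on the torus `𝕋² = (ℝ/ℤ)²` (matrix action with integer
coefficients).  Then `σ` is measure preserving, (essentially) free, and weakly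
mixing for the Haar (= volume) measure. -/
theorem stmt13 {Γ : Type*} [Group Γ] [Countable Γ]
    (ρ : Γ →* Matrix.SpecialLinearGroup (Fin 2) ℤ)
    (hinj : Function.Injective ρ)
    (horb : ∀ v : Fin 2 → ℤ, v ≠ 0 →
        {w : Fin 2 → ℤ | ∃ g : Γ,
          w = (ρ g : Matrix (Fin 2) (Fin 2) ℤ).mulVec v}.Infinite)
    (σ : Γ → (Fin 2 → UnitAddCircle) → (Fin 2 → UnitAddCircle))
    (hσ : ∀ (g : Γ) (x : Fin 2 → UnitAddCircle) (i : Fin 2),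
        σ g x i = ∑ j, ((ρ g : Matrix (Fin 2) (Fin 2) ℤ) i j) • x j) :
    (∀ g : Γ, MeasurePreserving (σ g) volume volume) ∧
    (∀ g : Γ, g ≠ 1 → volume {x : Fin 2 → UnitAddCircle | σ g x = x} = 0) ∧
    (∀ ε : ℝ, 0 < ε → ∀ F : Finset ((Fin 2 → UnitAddCircle) → ℂ),
      (∀ f ∈ F, Measurable f ∧ ∀ x, ‖f x‖ ≤ 1) →
      ∃ g : Γ, ∀ f₁ ∈ F, ∀ f₂ ∈ F,
        ‖(∫ x, f₁ (σ g x) * f₂ x) - (∫ x, f₁ x) * (∫ x, f₂ x)‖ ≤ ε) :=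
  stmt13_general (Matrix.SpecialLinearGroup.coeMonoidHom.comp ρ)
    (Subtype.val_injective.comp hinj) (fun _ ↦ infinite_range_vecMul_of_infinite_mulVec horb) σ hσ
end

section
/- Let N be a semifinite von Neumann algebra, and let J(N) denote the norm-closed two-sided ideal generated by the finite projections of N. Then an element T ∈ N belongs to J(N) if and only if for every s > 0 the spectral projection e_{[s,∞)}(|T|) is a finite projection of N. Consequently, the set of elements of N supported on finite projections is norm dense in J(N). -/
variable {H : Type*} [NormedAddCommGroup H] [InnerProductSpace ℂ H] [CompleteSpace H]

/-- A projection belonging to a von Neumann algebra. -/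
def IsProjIn (N : VonNeumannAlgebra H) (p : H →L[ℂ] H) : Prop :=
  p ∈ N ∧ p * p = p ∧ star p = p

/-- A finite projection of a von Neumann algebra: `p` is not Murray–von Neumann
equivalent (inside `N`) to a proper subprojection of itself. -/
def IsFiniteProjIn (N : VonNeumannAlgebra H) (p : H →L[ℂ] H) : Prop :=
  IsProjIn N p ∧ ∀ v : H →L[ℂ] H, v ∈ N → star v * v = p →
    (v * star v) * p = v * star v → v * star v = p

/-- The compact ideal space `J(N)`: the norm-closed two-sided ideal generated by
the finite projections of `N`. -/
noncomputable def compactIdealSpace (N : VonNeumannAlgebra H) : Set (H →L[ℂ] H) :=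
  closure (Submodule.span ℂ {y : H →L[ℂ] H |
    ∃ a b p : H →L[ℂ] H, a ∈ N ∧ b ∈ N ∧ IsFiniteProjIn N p ∧ y = a * p * b} : Set (H →L[ℂ] H))

/-!
The crux is that the sum of two orthogonal finite projections `E`, `F` is finite. If it were not,
`E + F` would dominate a nonzero properly infinite projection `q`, and so orthogonal projections
`G` and `G'` both equivalent to `q`. The part `A` of `G` orthogonal to `F` lies below `E`, the part
`B` of `G'` orthogonal to `E` lies below `F`, while `G - A` is equivalent to a subprojection of `F`
orthogonal to `B`, and `G' - B` to a subprojection of `E` orthogonal to `A`. Comparing `A` with `B`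
gives a central projection `z` with `(1 - z)G ≲ F` and `zG' ≲ E`. Hence `(1 - z)q` and `zq` are
both finite and properly infinite, that is, zero, and `q = 0`.

It follows that every element of the algebraic ideal generated by the finite projections is
supported on a finite projection. If `‖T - y‖ < s` with `y * f = y` and `f` finite, then
`‖T k‖ ≥ s‖k‖` on the range of `e_{[s,∞)}(|T|)`, so that this range meets the kernel of `f` only in
`0`, and `e_{[s,∞)}(|T|) ≲ f` is finite. Conversely, `‖T - T e_{[s,∞)}(|T|)‖ ≤ s`.
-/

theorem exists_maximal_pairwise {α : Type*} (X : Set α) (r : α → α → Prop) [Std.Symm r] :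
    ∃ S ⊆ X, S.Pairwise r ∧ ∀ w ∈ X, (∀ u ∈ S, r w u) → w ∈ S := by
  obtain ⟨S, ⟨hSX, hS⟩, hmax⟩ := zorn_subset {S | S ⊆ X ∧ S.Pairwise r} fun c hc hchain =>
    ⟨⋃₀ c, ⟨Set.sUnion_subset fun s hs => (hc hs).1,
      (Set.pairwise_sUnion hchain.directedOn).2 fun s hs => (hc hs).2⟩,
      fun _ => Set.subset_sUnion_of_mem⟩
  refine ⟨S, hSX, hS, fun w hw hwS => ?_⟩
  have hins : (insert w S).Pairwise r :=
    (Set.pairwise_insert_of_symm).2 ⟨hS, fun u hu _ => hwS u hu⟩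
  exact hmax ⟨Set.insert_subset hw hSX, hins⟩ (Set.subset_insert w S) (Set.mem_insert w S)

/-! ### Partial isometries and supports in star rings -/

section StarRing

variable {R : Type*} [Ring R] [StarRing R] {p q u v x : R} {S : Set R}

theorem star_mul_eq_star_iff (hp : IsSelfAdjoint p) : star x * p = star x ↔ p * x = x := by
  rw [← star_inj, star_mul, star_star, hp.star_eq]

theorem mul_star_eq_star_iff (hp : IsSelfAdjoint p) : p * star x = star x ↔ x * p = x := by
  rw [← star_inj, star_mul, star_star, hp.star_eq]

theorem mul_eq_left_iff_mul_eq_right (hp : IsSelfAdjoint p) (hq : IsSelfAdjoint q) :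
    p * q = p ↔ q * p = p := by
  simpa only [hp.star_eq] using star_mul_eq_star_iff hq (x := p)

theorem star_mul_eq_zero_comm : star u * v = 0 ↔ star v * u = 0 := by
  rw [← star_inj, star_mul, star_star, star_zero]

theorem mul_star_eq_zero_comm : u * star v = 0 ↔ v * star u = 0 := by
  rw [← star_inj, star_mul, star_star, star_zero]

theorem star_pow_mul_mul_pow_mul {d : R} (hv : star v * v * v = v) (hd : star v * v * d = d)
    (hdv : star d * v = 0) (m n : ℕ) :
    star (v ^ m * d) * (v ^ n * d) = if m = n then star d * d else 0 := by
  have hvd : ∀ n, star v * v * (v ^ n * d) = v ^ n * d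
    | 0 => by rw [pow_zero, one_mul, hd]
    | n + 1 => by rw [pow_succ', mul_assoc v, ← mul_assoc, hv]
  have zero_succ (n : ℕ) : star (v ^ 0 * d) * (v ^ (n + 1) * d) = 0 := by
    rw [pow_zero, one_mul, pow_succ', mul_assoc v, ← mul_assoc, hdv, zero_mul]
  induction m generalizing n with
  | zero =>
    cases n with
    | zero => rw [pow_zero, one_mul, if_pos rfl]
    | succ n => rw [zero_succ, if_neg n.succ_ne_zero.symm]
  | succ m ih =>
    cases n with
    | zero => rw [star_mul_eq_zero_comm.1 (zero_succ m), if_neg m.succ_ne_zero]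
    | succ n =>
      rw [pow_succ', pow_succ', mul_assoc, mul_assoc, star_mul v, mul_assoc, ← mul_assoc (star v),
        hvd, ih]
      simp only [add_left_inj]

/-- Partial isometries of a star ring: those `u` for which `star u * u` and `u * star u` are
projections, the right and left supports of `u`. -/
def IsPartialIsometry (u : R) : Prop := u * star u * u = u

namespace IsPartialIsometry

protected theorem star (hu : IsPartialIsometry u) : IsPartialIsometry (star u) := by
  rw [IsPartialIsometry, ← star_inj, star_mul, star_mul, star_star, ← mul_assoc]
  exact hu

theorem isStarProjection_mul_star_self (hu : IsPartialIsometry u) :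
    IsStarProjection (u * star u) :=
  ⟨by rw [IsIdempotentElem, ← mul_assoc, hu], .mul_star_self u⟩

theorem isStarProjection_star_mul_self (hu : IsPartialIsometry u) :
    IsStarProjection (star u * u) := by
  simpa only [star_star] using hu.star.isStarProjection_mul_star_self

theorem star_mul_self_eq (hu : IsPartialIsometry u) (hv : IsPartialIsometry v)
    (h : ∀ b, u * b = 0 ↔ v * b = 0) : star u * u = star v * v := by
  have huv : u * (star v * v) = u := by
    have := (h (star v * v - 1)).2 (by rw [mul_sub_one, ← mul_assoc, hv, sub_self])
    rwa [mul_sub_one, sub_eq_zero] at this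
  have hvu : v * (star u * u) = v := by
    have := (h (star u * u - 1)).1 (by rw [mul_sub_one, ← mul_assoc, hu, sub_self])
    rwa [mul_sub_one, sub_eq_zero] at this
  have huv' : star u * u * (star v * v) = star u * u := by rw [mul_assoc, huv]
  rwa [mul_eq_left_iff_mul_eq_right (.star_mul_self u) (.star_mul_self v), mul_assoc, hvu,
    eq_comm] at huv'

end IsPartialIsometry

/-- Two elements with orthogonal left supports and orthogonal right supports; pairwise orthogonal
partial isometries can be summed. -/
def StarOrthogonal (u v : R) : Prop := star u * v = 0 ∧ u * star v = 0

instance : Std.Symm (StarOrthogonal (R := R)) where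
  symm _ _ h := ⟨star_mul_eq_zero_comm.1 h.1, mul_star_eq_zero_comm.1 h.2⟩

theorem IsPartialIsometry.sum {ι : Type*} {s : Finset ι} {w : ι → R}
    (hw : ∀ i ∈ s, IsPartialIsometry (w i))
    (hort : (s : Set ι).Pairwise fun i j => StarOrthogonal (w i) (w j)) :
    IsPartialIsometry (∑ i ∈ s, w i) := by
  have hww : (∑ i ∈ s, w i) * star (∑ i ∈ s, w i) = ∑ i ∈ s, w i * star (w i) := by
    rw [star_sum, Finset.sum_mul_sum]
    exact Finset.sum_congr rfl fun i hi => Finset.sum_eq_single_of_mem i hi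
      fun j hj hji => (hort hi hj hji.symm).2
  rw [IsPartialIsometry, hww, Finset.sum_mul_sum]
  refine Finset.sum_congr rfl fun i hi => ?_
  rw [Finset.sum_eq_single_of_mem i hi fun j hj hji => by
    rw [mul_assoc, (hort hi hj hji.symm).1, mul_zero], hw i hi]

/-- A partial isometry whose right (left) support is the join of the right (left) supports of the
elements of `S`. For `S = {x}` the model is the partial isometry in the polar decomposition of `x`,
for a set of pairwise orthogonal partial isometries it is their sum. Joins of supports are
described by annihilators, which make sense in any star ring. -/
structure IsSupportIsometry (S : Set R) (u : R) : Prop where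
  isPartialIsometry : IsPartialIsometry u
  mul_right_eq_zero_iff (b : R) : u * b = 0 ↔ ∀ x ∈ S, x * b = 0
  mul_left_eq_zero_iff (b : R) : b * u = 0 ↔ ∀ x ∈ S, b * x = 0

namespace IsSupportIsometry

theorem mul_right_eq_self (hu : IsSupportIsometry S u) (h : ∀ x ∈ S, x * p = x) : u * p = u := by
  have : u * (p - 1) = 0 := (hu.mul_right_eq_zero_iff _).2 fun x hx => by
    rw [mul_sub, mul_one, h x hx, sub_self]
  rwa [mul_sub_one, sub_eq_zero] at this

theorem mul_left_eq_self (hu : IsSupportIsometry S u) (h : ∀ x ∈ S, p * x = x) : p * u = u := by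
  have : (p - 1) * u = 0 := (hu.mul_left_eq_zero_iff _).2 fun x hx => by
    rw [sub_mul, one_mul, h x hx, sub_self]
  rwa [sub_one_mul, sub_eq_zero] at this

theorem mul_rightSupport (hu : IsSupportIsometry S u) (hx : x ∈ S) : x * (star u * u) = x := by
  have : x * (star u * u - 1) = 0 := (hu.mul_right_eq_zero_iff _).1
    (by rw [mul_sub, ← mul_assoc, hu.isPartialIsometry, mul_one, sub_self]) x hx
  rwa [mul_sub_one, sub_eq_zero] at this

theorem leftSupport_mul (hu : IsSupportIsometry S u) (hx : x ∈ S) : u * star u * x = x := by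
  have : (u * star u - 1) * x = 0 := (hu.mul_left_eq_zero_iff _).1
    (by rw [sub_mul, hu.isPartialIsometry, one_mul, sub_self]) x hx
  rwa [sub_one_mul, sub_eq_zero] at this

theorem of_mul_eq_zero {U : R} (hS : ∀ u ∈ S, IsPartialIsometry u)
    (hleft : ∀ u ∈ S, u * star u * U = u) (hright : ∀ u ∈ S, U * (star u * u) = u)
    (mul_right_eq_zero : ∀ b, (∀ u ∈ S, u * b = 0) → U * b = 0)
    (mul_left_eq_zero : ∀ b, (∀ u ∈ S, b * u = 0) → b * U = 0) : IsSupportIsometry S U where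
  isPartialIsometry := by
    have hstar : ∀ u ∈ S, star U * u = star u * u := fun u hu => calc
      star U * u = star U * (u * star u * u) := by rw [hS u hu]
      _ = star (u * star u * U) * u := by simp only [star_mul, star_star, mul_assoc]
      _ = star u * u := by rw [hleft u hu]
    have hrange : ∀ u ∈ S, (U * star U - 1) * u = 0 := fun u hu => by
      rw [sub_mul, one_mul, mul_assoc, hstar u hu, hright u hu, sub_self]
    have := mul_left_eq_zero _ hrange
    rwa [sub_one_mul, sub_eq_zero] at this
  mul_right_eq_zero_iff b := ⟨fun h u hu => by rw [← hleft u hu, mul_assoc, h, mul_zero],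
    mul_right_eq_zero b⟩
  mul_left_eq_zero_iff b := ⟨fun h u hu => by rw [← hright u hu, ← mul_assoc, h, zero_mul],
    mul_left_eq_zero b⟩

end IsSupportIsometry

end StarRing

section CStarRing

variable {R : Type*} [NormedRing R] [StarRing R] [CStarRing R] {u v : R}

theorem IsPartialIsometry.of_star_mul_self (h : IsStarProjection (star v * v)) :
    IsPartialIsometry v := by
  have hvv : star v * v * (star v * v) = star v * v := h.isIdempotentElem
  have : star (v * (star v * v) - v) * (v * (star v * v) - v) = 0 := by
    simp only [star_sub, star_mul, star_star, sub_mul, mul_sub, ← mul_assoc] at hvv ⊢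
    simp only [hvv, sub_self]
  rwa [CStarRing.star_mul_self_eq_zero_iff, sub_eq_zero, ← mul_assoc] at this

theorem IsPartialIsometry.norm_le_one (hu : IsPartialIsometry u) : ‖u‖ ≤ 1 := by
  have h := hu.isStarProjection_star_mul_self.norm_le
  rw [CStarRing.norm_star_mul_self] at h
  exact (abs_le_one_iff_mul_self_le_one.2 h).trans' (le_abs_self _)

theorem mul_eq_zero_iff_of_star_mul_self_eq (h : star u * u = star v * v) (b : R) :
    u * b = 0 ↔ v * b = 0 := by
  have hstar (w : R) : star (w * b) * (w * b) = star b * (star w * w) * b := by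
    simp only [star_mul, mul_assoc]
  rw [← CStarRing.star_mul_self_eq_zero_iff (u * b), hstar, h, ← hstar,
    CStarRing.star_mul_self_eq_zero_iff]

end CStarRing

section CStarAlgebra

variable {A : Type*} [CStarAlgebra A] [PartialOrder A] [StarOrderedRing A] {a p : A} {s : ℝ}

theorem norm_mul_one_sub_le (hs : 0 ≤ s) (ha : 0 ≤ a) (hp : IsStarProjection p)
    (hpa : Commute p a) (h : a * (1 - p) ≤ s • (1 - p)) : ‖a * (1 - p)‖ ≤ s := by
  have hpos : 0 ≤ a * (1 - p) :=
    ((Commute.one_left a).sub_left hpa).symm.mul_nonneg ha hp.one_sub.nonneg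
  rw [CStarAlgebra.norm_le_iff_le_algebraMap _ hs hpos, Algebra.algebraMap_eq_smul_one]
  exact h.trans (smul_le_smul_of_nonneg_left hp.one_sub.le_one hs)

end CStarAlgebra

/-! ### Orthogonal sums and polar decompositions on Hilbert spaces -/

section HilbertSpace

open ContinuousLinearMap

section RCLike

variable {𝕜 E : Type*} [RCLike 𝕜] [NormedAddCommGroup E] [InnerProductSpace 𝕜 E]

section HasSum

variable {S : Set (E →L[𝕜] E)} {U b c v : E →L[𝕜] E}

theorem hasSum_mul_mul_apply
    (hU : ∀ k, HasSum (fun u : S => (u : E →L[𝕜] E) k) (U k))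
    (b c : E →L[𝕜] E) (k : E) :
    HasSum (fun u : S => (b * (u : E →L[𝕜] E) * c) k) ((b * U * c) k) :=
  (hU (c k)).mapL b

theorem mul_mul_eq_of_hasSum (hU : ∀ k, HasSum (fun u : S => (u : E →L[𝕜] E) k) (U k))
    (hv : v ∈ S) (h : ∀ u ∈ S, u ≠ v → b * u * c = 0) :
    b * U * c = b * v * c := by
  ext k
  refine (hasSum_mul_mul_apply hU b c k).unique (hasSum_single (⟨v, hv⟩ : S) fun u hu => ?_)
  rw [h u u.2 fun huv => hu (Subtype.ext huv), zero_apply]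

theorem mul_mul_eq_zero_of_hasSum
    (hU : ∀ k, HasSum (fun u : S => (u : E →L[𝕜] E) k) (U k))
    (h : ∀ u ∈ S, b * u * c = 0) : b * U * c = 0 := by
  ext k
  refine (hasSum_mul_mul_apply hU b c k).unique ?_
  simpa only [h _ (Subtype.prop _), zero_apply] using hasSum_zero

end HasSum

variable [CompleteSpace E]

theorem star_mul_self_eq_iff_norm_apply_eq {x y : E →L[𝕜] E} :
    star x * x = star y * y ↔ ∀ k, ‖x k‖ = ‖y k‖ := by
  refine ⟨fun h k => ?_, fun h => ?_⟩
  · rw [apply_norm_eq_sqrt_inner_adjoint_left, apply_norm_eq_sqrt_inner_adjoint_left (A := y)]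
    exact congrArg (fun z : E →L[𝕜] E => √(RCLike.re (inner 𝕜 (z k) k))) h
  · have hsymm : (star x * x - star y * y).IsSymmetric :=
      ((IsSelfAdjoint.star_mul_self x).sub (IsSelfAdjoint.star_mul_self y)).isSymmetric
    refine sub_eq_zero.1 (coe_injective (hsymm.inner_map_self_eq_zero.1 fun k => ?_))
    have hinner (z : E →L[𝕜] E) : inner 𝕜 ((star z * z) k) k = (‖z k‖ : 𝕜) ^ 2 := by
      rw [mul_apply_eq_comp, star_eq_adjoint, adjoint_inner_left, inner_self_eq_norm_sq_to_K]
    rw [coe_coe, sub_apply, inner_sub_left, hinner, hinner, h, sub_self]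

theorem norm_sum_apply_le_of_pairwise_starOrthogonal {ι : Type*} {w : ι → E →L[𝕜] E}
    (hw : ∀ i, IsPartialIsometry (w i)) (hort : Pairwise fun i j => StarOrthogonal (w i) (w j))
    (s : Finset ι) (k : E) : ‖∑ i ∈ s, w i k‖ ≤ ‖k‖ := by
  have h := IsPartialIsometry.sum (fun i _ => hw i) (hort.set_pairwise (s : Set ι))
  simpa only [sum_apply, one_mul] using (∑ i ∈ s, w i).le_of_opNorm_le h.norm_le_one k

theorem summable_apply_of_pairwise_starOrthogonal {ι : Type*} {w : ι → E →L[𝕜] E}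
    (hw : ∀ i, IsPartialIsometry (w i)) (hort : Pairwise fun i j => StarOrthogonal (w i) (w j))
    (k : E) : Summable fun i => w i k := by
  have hfam : OrthogonalFamily 𝕜 (fun i => (w i).range) fun i => (w i).range.subtypeₗᵢ := by
    rintro i j hij ⟨_, a, rfl⟩ ⟨_, b, rfl⟩
    calc inner 𝕜 (w i a) (w j b) = inner 𝕜 a ((star (w i) * w j) b) :=
          (adjoint_inner_right (w i) a (w j b)).symm
      _ = 0 := by rw [(hort hij).1, zero_apply, inner_zero_right]
  refine (hfam.summable_iff_norm_sq_summable fun i => ⟨w i k, k, rfl⟩).2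
    (summable_of_sum_le (c := ‖k‖ ^ 2) (fun i => sq_nonneg _) fun s => ?_)
  rw [← hfam.norm_sum]
  gcongr
  exact norm_sum_apply_le_of_pairwise_starOrthogonal hw hort s k

theorem exists_forall_hasSum_of_pairwise_starOrthogonal {ι : Type*} {w : ι → E →L[𝕜] E}
    (hw : ∀ i, IsPartialIsometry (w i)) (hort : Pairwise fun i j => StarOrthogonal (w i) (w j)) :
    ∃ U : E →L[𝕜] E, ∀ k, HasSum (fun i => w i k) (U k) := by
  have hsum k := (summable_apply_of_pairwise_starOrthogonal hw hort k).hasSum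
  let U : E →ₗ[𝕜] E := linearMapOfTendsto (l := Filter.atTop) (fun k => ∑' i, w i k)
    (fun s : Finset ι => ((∑ i ∈ s, w i : E →L[𝕜] E) : E →ₗ[𝕜] E))
    (tendsto_pi_nhds.2 fun k => by
      simpa only [HasSum, SummationFilter.unconditional_filter, coe_coe, sum_apply] using hsum k)
  refine ⟨U.mkContinuous 1 fun k => ?_, hsum⟩
  rw [one_mul]
  exact le_of_tendsto (hsum k).norm
    (.of_forall fun s => norm_sum_apply_le_of_pairwise_starOrthogonal hw hort s k)

theorem isSupportIsometry_of_hasSum {S : Set (E →L[𝕜] E)} {U : E →L[𝕜] E}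
    (hU : ∀ k, HasSum (fun u : S => (u : E →L[𝕜] E) k) (U k)) (hS : ∀ u ∈ S, IsPartialIsometry u)
    (hort : S.Pairwise StarOrthogonal) : IsSupportIsometry S U := by
  refine .of_mul_eq_zero hS (fun v hv => ?_) (fun v hv => ?_) (fun b hb => ?_) fun b hb => ?_
  · have := mul_mul_eq_of_hasSum hU (b := v * star v) (c := 1) hv fun u hu huv => by
      rw [mul_one, mul_assoc, (hort hv hu huv.symm).1, mul_zero]
    rwa [mul_one, mul_one, hS v hv] at this
  · have := mul_mul_eq_of_hasSum hU (b := 1) (c := star v * v) hv fun u hu huv => by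
      rw [one_mul, ← mul_assoc, (hort hu hv huv).2, zero_mul]
    rwa [one_mul, one_mul, ← mul_assoc v, hS v hv] at this
  · simpa only [one_mul] using mul_mul_eq_zero_of_hasSum hU (b := 1) (by simpa only [one_mul])
  · simpa only [mul_one] using mul_mul_eq_zero_of_hasSum hU (c := 1) (by simpa only [mul_one])

theorem exists_comp_eq_of_norm_apply_eq {F G : Type*} [NormedAddCommGroup F]
    [NormedSpace 𝕜 F] [NormedAddCommGroup G] [NormedSpace 𝕜 G] [CompleteSpace G] {a : F →L[𝕜] E}
    {x : F →L[𝕜] G} (h : ∀ k, ‖a k‖ = ‖x k‖) :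
    ∃ u : E →L[𝕜] G, u ∘L a = x ∧ ∀ z, ‖u z‖ = ‖a.range.topologicalClosure.starProjection z‖ := by
  let K := a.range.topologicalClosure
  have hmem k : a k ∈ K := a.range.le_topologicalClosure ⟨k, rfl⟩
  let e : F →L[𝕜] K := a.codRestrict K hmem
  have he : DenseRange e := Subtype.dense_iff.2 <| by
    rw [← Set.range_comp]
    exact subset_rfl
  let w : K →L[𝕜] G := x.toLinearMap.extendOfNorm e.toLinearMap
  have hwe k : w (e k) = x k :=
    LinearMap.extendOfNorm_eq he ⟨1, fun k => by rw [one_mul]; exact (h k).ge⟩ k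
  have hw z : ‖w z‖ = ‖z‖ := by
    refine he.induction_on z (isClosed_eq (by fun_prop) (by fun_prop)) fun k => ?_
    rw [hwe, ← h]
    rfl
  refine ⟨w ∘L K.orthogonalProjectionOnto, ?_, fun z => hw _⟩
  ext k
  rw [comp_apply, comp_apply, ← hwe]
  exact congrArg w (K.orthogonalProjectionOnto_mem_subspace_eq_self (e k))

theorem starProjection_closure_range_apply_eq_zero_iff {a : E →L[𝕜] E} (ha : IsStarNormal a)
    {z : E} : a.range.topologicalClosure.starProjection z = 0 ↔ a z = 0 := by
  rw [Submodule.starProjection_apply_eq_zero_iff, Submodule.orthogonal_closure,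
    ha.orthogonal_range, LinearMap.mem_ker, coe_coe]

end RCLike

section Complex

variable {E : Type*} [NormedAddCommGroup E] [InnerProductSpace ℂ E] [CompleteSpace E]

theorem exists_isSupportIsometry_mul_abs_eq (x : E →L[ℂ] E) :
    ∃ u, IsSupportIsometry {x} u ∧ u * CFC.abs x = x := by
  set a := CFC.abs x
  have ha : IsSelfAdjoint a := (CFC.abs_nonneg x).isSelfAdjoint
  have hax : star a * a = star x * x := by rw [ha.star_eq]; exact CFC.abs_mul_abs x
  obtain ⟨u, hua : u * a = x, hu⟩ :=
    exists_comp_eq_of_norm_apply_eq (star_mul_self_eq_iff_norm_apply_eq.1 hax)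
  set P := a.range.topologicalClosure.starProjection
  have hP : IsStarProjection P := isStarProjection_starProjection
  have huu : star u * u = P := by
    rw [star_mul_self_eq_iff_norm_apply_eq.2 hu, hP.isSelfAdjoint.star_eq, hP.isIdempotentElem]
  have hker (b : E →L[ℂ] E) : u * b = 0 ↔ a * b = 0 := by
    simp only [ContinuousLinearMap.ext_iff, mul_apply_eq_comp, zero_apply]
    refine forall_congr' fun k => ?_
    rw [← norm_eq_zero, hu, norm_eq_zero,
      starProjection_closure_range_apply_eq_zero_iff ha.isStarNormal]
  have hpi : IsPartialIsometry u := .of_star_mul_self (huu ▸ hP)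
  refine ⟨u, ⟨hpi, fun b => ?_, fun b => ?_⟩, hua⟩
  · rw [hker, mul_eq_zero_iff_of_star_mul_self_eq hax]
    simp only [Set.mem_singleton_iff, forall_eq]
  · simp only [Set.mem_singleton_iff, forall_eq]
    refine ⟨fun h => by rw [← hua, ← mul_assoc, h, zero_mul], fun h => ?_⟩
    have hau : a * star (b * u) = 0 := by
      rw [mul_star_eq_zero_comm, ha.star_eq, mul_assoc, hua, h]
    have hbuu : b * u * star u = 0 := mul_star_eq_zero_comm.1 ((hker _).2 hau)
    rw [← hpi, ← mul_assoc, ← mul_assoc, hbuu, zero_mul]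

theorem mul_norm_le_norm_apply {a p : E →L[ℂ] E} {s : ℝ} (h : s • p ≤ a * p) {k : E}
    (hk : p k = k) : s * ‖k‖ ≤ ‖a k‖ := by
  have hre : s * ‖k‖ * ‖k‖ ≤ ‖a k‖ * ‖k‖ := by
    have hpos := ((nonneg_iff_isPositive _).1 (sub_nonneg.2 h)).re_inner_nonneg_left k
    rw [sub_apply, mul_apply_eq_comp, smul_apply, hk, inner_sub_left, map_sub,
      inner_smul_left_eq_smul, RCLike.smul_re, inner_self_eq_norm_mul_norm, sub_nonneg,
      ← mul_assoc] at hpos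
    exact hpos.trans (re_inner_le_norm _ _)
  rcases (norm_nonneg k).eq_or_lt with hk0 | hk0
  · rw [← hk0, mul_zero]
    exact norm_nonneg _
  · exact le_of_mul_le_mul_right hre hk0

theorem norm_sub_mul_le_of_mul_one_sub_le {T a p : E →L[ℂ] E} {s : ℝ} (ha : 0 ≤ a)
    (haT : ∀ k, ‖a k‖ = ‖T k‖) (hs : 0 ≤ s) (hp : IsStarProjection p) (hpa : Commute p a)
    (h : a * (1 - p) ≤ s • (1 - p)) : ‖T - T * p‖ ≤ s := by
  refine opNorm_le_bound _ hs fun k => ?_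
  calc ‖(T - T * p) k‖ = ‖(a * (1 - p)) k‖ := by
        rw [← mul_one_sub, mul_apply_eq_comp, mul_apply_eq_comp, haT]
    _ ≤ s * ‖k‖ := (a * (1 - p)).le_of_opNorm_le (norm_mul_one_sub_le hs ha hp hpa h) k

end Complex

end HilbertSpace

/-! ### Projections of a von Neumann algebra -/

section VonNeumannAlgebra

variable {N : VonNeumannAlgebra H} {p p' q q' r u x z : H →L[ℂ] H}
  {S : Set (H →L[ℂ] H)}

theorem mem_of_forall_commute (h : ∀ c ∈ N.commutant, Commute c x) : x ∈ N := by
  rw [← N.commutant_commutant, VonNeumannAlgebra.mem_commutant_iff]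
  exact h

theorem commute_of_mem_commutant {c : H →L[ℂ] H} (hx : x ∈ N) (hc : c ∈ N.commutant) :
    Commute c x :=
  (VonNeumannAlgebra.mem_commutant_iff.1 hc x hx).symm

theorem abs_mem (hx : x ∈ N) : CFC.abs x ∈ N :=
  mem_of_forall_commute fun _ hc => ((commute_of_mem_commutant hx hc).symm.cfcAbs_left
    (commute_of_mem_commutant hx (star_mem hc)).symm).symm

theorem exists_isSupportIsometry_singleton (hx : x ∈ N) : ∃ u ∈ N, IsSupportIsometry {x} u := by
  obtain ⟨u, hu, hua⟩ := exists_isSupportIsometry_mul_abs_eq x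
  have ha : IsSelfAdjoint (CFC.abs x) := (CFC.abs_nonneg x).isSelfAdjoint
  have hker (b : H →L[ℂ] H) (hb : CFC.abs x * b = 0) : u * b = 0 :=
    (hu.mul_right_eq_zero_iff b).2 fun y hy => by rw [hy, ← hua, mul_assoc, hb, mul_zero]
  refine ⟨u, mem_of_forall_commute fun c hc => sub_eq_zero.1 ?_, hu⟩
  have hca : c * CFC.abs x = CFC.abs x * c := commute_of_mem_commutant (abs_mem hx) hc
  have hcx : c * x = x * c := commute_of_mem_commutant hx hc
  have hd : CFC.abs x * star (c * u - u * c) = 0 := by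
    rw [mul_star_eq_zero_comm, ha.star_eq, sub_mul, mul_assoc, mul_assoc, hca, ← mul_assoc u, hua,
      hcx, sub_self]
  rw [← CStarRing.mul_star_self_eq_zero_iff, sub_mul, mul_assoc, mul_assoc, hker _ hd, mul_zero,
    hker _ (by rw [← mul_assoc, ← hca, mul_assoc, hd, mul_zero]), sub_zero]

theorem exists_isSupportIsometry_of_pairwise_starOrthogonal
    (hS : ∀ u ∈ S, u ∈ N ∧ IsPartialIsometry u) (hort : S.Pairwise StarOrthogonal) :
    ∃ U ∈ N, IsSupportIsometry S U := by
  obtain ⟨U, hU⟩ := exists_forall_hasSum_of_pairwise_starOrthogonal (fun u : S => (hS u u.2).2)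
    fun u v huv => hort u.2 v.2 fun h => huv (Subtype.ext h)
  refine ⟨U, mem_of_forall_commute fun c hc => ?_,
    isSupportIsometry_of_hasSum hU (fun u hu => (hS u hu).2) hort⟩
  ext k
  have hcomm (u : S) : c ((u : H →L[ℂ] H) k) = (u : H →L[ℂ] H) (c k) :=
    congr($(commute_of_mem_commutant (hS u u.2).1 hc) k)
  exact ((hU k).mapL c).unique (by simpa only [hcomm, mul_apply_eq_comp] using hU (c k))

namespace IsProjIn

theorem isStarProjection (hp : IsProjIn N p) : IsStarProjection p := ⟨hp.2.1, hp.2.2⟩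

theorem of_isStarProjection (hpN : p ∈ N) (hp : IsStarProjection p) : IsProjIn N p :=
  ⟨hpN, hp.isIdempotentElem, hp.isSelfAdjoint⟩

theorem one_sub (hp : IsProjIn N p) : IsProjIn N (1 - p) :=
  of_isStarProjection (sub_mem (one_mem N) hp.1) hp.isStarProjection.one_sub

theorem sub (hp : IsProjIn N p) (hq : IsProjIn N q) (h : p * q = p) : IsProjIn N (q - p) :=
  of_isStarProjection (sub_mem hq.1 hp.1)
    (hp.isStarProjection.sub_of_mul_eq_left hq.isStarProjection h)

theorem isPartialIsometry (hp : IsProjIn N p) (hu : star u * u = p) :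
    IsPartialIsometry u :=
  .of_star_mul_self (hu ▸ hp.isStarProjection)

theorem star_mul_self (huN : u ∈ N) (hu : IsPartialIsometry u) :
    IsProjIn N (star u * u) :=
  of_isStarProjection (mul_mem (star_mem huN) huN) hu.isStarProjection_star_mul_self

theorem mul_star_self (huN : u ∈ N) (hu : IsPartialIsometry u) :
    IsProjIn N (u * star u) :=
  of_isStarProjection (mul_mem huN (star_mem huN)) hu.isStarProjection_mul_star_self

end IsProjIn

theorem isProjIn_starProjection {K : Submodule ℂ H} [K.HasOrthogonalProjection]
    (h : ∀ c ∈ N.commutant, ∀ k ∈ K, c k ∈ K) : IsProjIn N K.starProjection := by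
  refine .of_isStarProjection ?_ isStarProjection_starProjection
  rw [VonNeumannAlgebra.IsStarProjection.mem_iff isStarProjection_starProjection]
  intro c hc
  rw [Submodule.range_starProjection]
  exact h c hc

/-- Central projections of a von Neumann algebra, the cutting parameters of comparison theory. -/
def IsCentralProjIn (N : VonNeumannAlgebra H) (z : H →L[ℂ] H) : Prop :=
  IsProjIn N z ∧ z ∈ N.commutant

namespace IsCentralProjIn

theorem commute (hz : IsCentralProjIn N z) (hx : x ∈ N) : Commute z x :=
  commute_of_mem_commutant hx hz.2

theorem one_sub (hz : IsCentralProjIn N z) : IsCentralProjIn N (1 - z) :=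
  ⟨hz.1.one_sub, sub_mem (one_mem _) hz.2⟩

protected theorem star_mul (hz : IsCentralProjIn N z) (hx : x ∈ N) : star (z * x) = z * star x := by
  rw [StarMul.star_mul, hz.1.2.2, hz.commute (star_mem hx)]

theorem mul_mul_mul (hz : IsCentralProjIn N z) (hx : x ∈ N) (y : H →L[ℂ] H) :
    z * x * (z * y) = z * (x * y) := by
  rw [mul_assoc, ← mul_assoc x, ← hz.commute hx, ← mul_assoc, ← mul_assoc, hz.1.2.1, mul_assoc]

end IsCentralProjIn

theorem exists_isCentralProjIn_separating {A B : H →L[ℂ] H} (hA : A ∈ N)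
    (h : ∀ y ∈ N, A * y * B = 0) : ∃ z, IsCentralProjIn N z ∧ A * z = 0 ∧ z * B = B := by
  let K : Submodule ℂ H := ⨅ y : N, (A * (y : H →L[ℂ] H)).ker
  have mem_K k : k ∈ K ↔ ∀ y ∈ N, A (y k) = 0 := by
    simp only [K, Submodule.mem_iInf, LinearMap.mem_ker, Subtype.forall]
    rfl
  have hK : IsClosed (K : Set H) := by
    rw [Submodule.coe_iInf]
    exact isClosed_iInter fun y => (A * (y : H →L[ℂ] H)).isClosed_ker
  have := hK.completeSpace_coe
  have hKN : IsProjIn N K.starProjection := isProjIn_starProjection fun c hc k hk => by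
    refine (mem_K _).2 fun y hy => ?_
    have hcAy : c * (A * y) = A * y * c := commute_of_mem_commutant (mul_mem hA hy) hc
    rw [show A (y (c k)) = c (A (y k)) from congr($hcAy.symm k), (mem_K k).1 hk y hy, map_zero]
  have hKN' : IsProjIn N.commutant K.starProjection := isProjIn_starProjection fun c hc k hk => by
    rw [VonNeumannAlgebra.commutant_commutant] at hc
    exact (mem_K _).2 fun y hy => (mem_K k).1 hk (y * c) (mul_mem hy hc)
  refine ⟨K.starProjection, ⟨hKN, hKN'.1⟩, ?_, ?_⟩
  · ext k
    exact (mem_K _).1 (K.starProjection_apply_mem k) 1 (one_mem N)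
  · ext k
    exact Submodule.starProjection_eq_self_iff.2 ((mem_K _).2 fun y hy => congr($(h y hy) k))

/-! ### Comparison of projections -/

/-- Murray–von Neumann subequivalence `p ≲ q` relative to `N`, for projections `p` and `q`: the
range of the implementing partial isometry `w` is described by `q * w = w` rather than by an
intermediate subprojection of `q`. -/
def Subequiv (N : VonNeumannAlgebra H) (p q : H →L[ℂ] H) : Prop :=
  ∃ w ∈ N, star w * w = p ∧ q * w = w

namespace Subequiv

theorem of_isPartialIsometry {w : H →L[ℂ] H} (hwN : w ∈ N) (hw : IsPartialIsometry w) :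
    Subequiv N (star w * w) (w * star w) :=
  ⟨w, hwN, rfl, hw⟩

theorem trans (hpq : Subequiv N p q) (hqr : Subequiv N q r) : Subequiv N p r := by
  obtain ⟨w, hwN, hw, hqw⟩ := hpq
  obtain ⟨v, hvN, hv, hrv⟩ := hqr
  refine ⟨v * w, mul_mem hvN hwN, ?_, by rw [← mul_assoc, hrv]⟩
  rw [star_mul, mul_assoc, ← mul_assoc (star v), hv, hqw, hw]

theorem mono_right (hpq : Subequiv N p q) (h : r * q = q) : Subequiv N p r := by
  obtain ⟨w, hwN, hw, hqw⟩ := hpq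
  exact ⟨w, hwN, hw, by rw [← hqw, ← mul_assoc, h]⟩

theorem add (hpq : Subequiv N p q) (hpq' : Subequiv N p' q') (hq : IsSelfAdjoint q)
    (hq' : IsSelfAdjoint q') (hqq' : q * q' = 0) : Subequiv N (p + p') (q + q') := by
  obtain ⟨w, hwN, hw, hqw⟩ := hpq
  obtain ⟨w', hwN', hw', hqw'⟩ := hpq'
  have hq'q : q' * q = 0 := by rw [← star_inj, star_mul, hq.star_eq, hq'.star_eq, hqq', star_zero]
  have h1 : q * w' = 0 := by rw [← hqw', ← mul_assoc, hqq', zero_mul]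
  have h2 : q' * w = 0 := by rw [← hqw, ← mul_assoc, hq'q, zero_mul]
  have h3 : star w * w' = 0 := by
    rw [← (star_mul_eq_star_iff hq).2 hqw, mul_assoc, h1, mul_zero]
  have h4 : star w' * w = 0 := star_mul_eq_zero_comm.1 h3
  refine ⟨w + w', add_mem hwN hwN', ?_, ?_⟩
  · rw [star_add, add_mul, mul_add, mul_add, hw, hw', h3, h4, add_zero, zero_add]
  · rw [add_mul, mul_add, mul_add, hqw, hqw', h1, h2, add_zero, zero_add]

theorem central_mul (hpq : Subequiv N p q) (hq : q ∈ N) (hz : IsCentralProjIn N z) :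
    Subequiv N (z * p) (z * q) := by
  obtain ⟨w, hwN, hw, hqw⟩ := hpq
  refine ⟨z * w, mul_mem hz.1.1 hwN, ?_, by rw [hz.mul_mul_mul hq, hqw]⟩
  rw [hz.star_mul hwN, hz.mul_mul_mul (star_mem hwN), hw]

theorem of_central_mul (hpq : Subequiv N p (z * q)) (hq : IsProjIn N q)
    (hz : IsCentralProjIn N z) : Subequiv N p q :=
  hpq.mono_right (by rw [← mul_assoc, ← hz.commute hq.1, mul_assoc, hq.2.1])

end Subequiv

theorem exists_isPartialIsometry_ne_zero {A B : H →L[ℂ] H} (hA : IsProjIn N A)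
    (hB : IsProjIn N B) (hx : x ∈ N) (h : B * x * A ≠ 0) :
    ∃ w ∈ N, w ≠ 0 ∧ IsPartialIsometry w ∧ w * A = w ∧ B * w = w := by
  obtain ⟨w, hwN, hw⟩ := exists_isSupportIsometry_singleton (mul_mem (mul_mem hB.1 hx) hA.1)
  refine ⟨w, hwN, ?_, hw.isPartialIsometry,
    hw.mul_right_eq_self fun y hy => by rw [hy, mul_assoc, hA.2.1],
    hw.mul_left_eq_self fun y hy => by rw [hy, ← mul_assoc, ← mul_assoc, hB.2.1]⟩
  rintro rfl
  exact h (by rw [← mul_one (B * x * A), (hw.mul_right_eq_zero_iff 1).1 (zero_mul 1) _ rfl])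

theorem exists_maximal_isPartialIsometry {A B : H →L[ℂ] H} (hA : IsProjIn N A)
    (hB : IsProjIn N B) :
    ∃ U ∈ N, IsPartialIsometry U ∧ U * A = U ∧ B * U = U ∧
      ∀ y ∈ N, (B - U * star U) * y * (A - star U * U) = 0 := by
  let X := {u | u ∈ N ∧ IsPartialIsometry u ∧ u * A = u ∧ B * u = u}
  obtain ⟨S, hSX, hort, hmax⟩ := exists_maximal_pairwise X StarOrthogonal
  obtain ⟨U, hUN, hU⟩ := exists_isSupportIsometry_of_pairwise_starOrthogonal
    (fun u hu => ⟨(hSX hu).1, (hSX hu).2.1⟩) hort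
  have hUA : U * A = U := hU.mul_right_eq_self fun u hu => (hSX hu).2.2.1
  have hBU : B * U = U := hU.mul_left_eq_self fun u hu => (hSX hu).2.2.2
  refine ⟨U, hUN, hU.isPartialIsometry, hUA, hBU, fun y hy => ?_⟩
  have hA' : IsProjIn N (A - star U * U) :=
    (IsProjIn.star_mul_self hUN hU.isPartialIsometry).sub hA (by rw [mul_assoc, hUA])
  have hB' : IsProjIn N (B - U * star U) :=
    (IsProjIn.mul_star_self hUN hU.isPartialIsometry).sub hB
      (by rw [mul_assoc, (star_mul_eq_star_iff hB.2.2).2 hBU])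
  have hA'A : (A - star U * U) * A = A - star U * U := by rw [sub_mul, hA.2.1, mul_assoc, hUA]
  have hBB' : B * (B - U * star U) = B - U * star U := by rw [mul_sub, hB.2.1, ← mul_assoc, hBU]
  have hSA' : ∀ u ∈ S, u * (A - star U * U) = 0 := fun u hu => by
    rw [mul_sub, hU.mul_rightSupport hu, (hSX hu).2.2.1, sub_self]
  have hB'S : ∀ u ∈ S, (B - U * star U) * u = 0 := fun u hu => by
    rw [sub_mul, hU.leftSupport_mul hu, (hSX hu).2.2.2, sub_self]
  generalize A - star U * U = A' at *
  generalize B - U * star U = B' at *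
  by_contra hne
  obtain ⟨w, hwN, hw0, hw, hwA', hB'w⟩ := exists_isPartialIsometry_ne_zero hA' hB' hy hne
  have hwS : w ∈ S := hmax w ⟨hwN, hw, by rw [← hwA', mul_assoc, hA'A],
    by rw [← hB'w, ← mul_assoc, hBB']⟩ fun u hu => by
    constructor
    · rw [← (star_mul_eq_star_iff hB'.2.2).2 hB'w, mul_assoc, hB'S u hu, mul_zero]
    · rw [← hwA', mul_assoc, mul_star_eq_zero_comm.1 (by rw [hA'.2.2, hSA' u hu]), mul_zero]
  exact hw0 (by rw [← hwA', hSA' w hwS])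

theorem exists_isCentralProjIn_comparison {A B : H →L[ℂ] H} (hA : IsProjIn N A)
    (hB : IsProjIn N B) :
    ∃ z, IsCentralProjIn N z ∧ Subequiv N ((1 - z) * A) B ∧ Subequiv N (z * B) A := by
  obtain ⟨U, hUN, hU, hUA, hBU, hsep⟩ := exists_maximal_isPartialIsometry hA hB
  obtain ⟨z, hz, hBz, hzA⟩ := exists_isCentralProjIn_separating
    (sub_mem hB.1 (mul_mem hUN (star_mem hUN))) hsep
  have hG : IsProjIn N (U * star U) := .mul_star_self hUN hU
  have hG' : IsProjIn N (star U * U) := .star_mul_self hUN hU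
  have hAU : A * star U = star U := (mul_star_eq_star_iff hA.2.2).2 hUA
  have hzA' : (1 - z) * A = (1 - z) * (star U * U) := by
    rw [← sub_eq_zero, ← mul_sub, sub_mul, one_mul, hzA, sub_self]
  have hzB' : z * B = z * (U * star U) := by
    rw [← sub_eq_zero, ← mul_sub, hz.commute (sub_mem hB.1 (mul_mem hUN (star_mem hUN))), hBz]
  refine ⟨z, hz, ?_, ?_⟩
  · rw [hzA']
    exact (((Subequiv.of_isPartialIsometry hUN hU).central_mul hG.1 hz.one_sub).of_central_mul
      hG hz.one_sub).mono_right (by rw [← mul_assoc, hBU])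
  · rw [hzB']
    have hU' := Subequiv.of_isPartialIsometry (star_mem hUN) hU.star
    rw [star_star] at hU'
    exact ((hU'.central_mul hG'.1 hz).of_central_mul hG' hz).mono_right
      (by rw [← mul_assoc, hAU])

variable {E F G G' : H →L[ℂ] H}

theorem exists_isSupportIsometry_mul_add_eq (hp : IsProjIn N p) (hq : IsProjIn N q) :
    ∃ a ∈ N, IsSupportIsometry {p * q} a ∧ p * a = a ∧
      ∃ r, IsProjIn N r ∧ star a * a + r = q ∧ q * r = r ∧ p * r = 0 := by
  obtain ⟨a, haN, ha⟩ := exists_isSupportIsometry_singleton (mul_mem hp.1 hq.1)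
  have hpa : p * a = a := ha.mul_left_eq_self <| by
    rintro _ rfl
    rw [← mul_assoc, hp.2.1]
  have haq : a * q = a := ha.mul_right_eq_self <| by
    rintro _ rfl
    rw [mul_assoc, hq.2.1]
  have hqa : q * (star a * a) = star a * a := by
    rw [← mul_assoc, (mul_star_eq_star_iff hq.2.2).2 haq]
  have hpqa : p * (star a * a) = p * q := by
    rw [← hqa, ← mul_assoc, ha.mul_rightSupport rfl]
  refine ⟨a, haN, ha, hpa, q - star a * a, (IsProjIn.star_mul_self haN ha.isPartialIsometry).sub
    hq (by rw [mul_assoc, haq]), add_sub_cancel _ _, ?_, ?_⟩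
  · rw [mul_sub, hq.2.1, hqa]
  · rw [mul_sub, hpqa, sub_self]

theorem subequiv_of_forall_apply_eq_zero (hp : IsProjIn N p) (hq : IsProjIn N q)
    (h : ∀ k, p k = k → q k = 0 → k = 0) : Subequiv N p q := by
  obtain ⟨w, hwN, -, hqw, r, -, hwr, hpr, hqr⟩ := exists_isSupportIsometry_mul_add_eq hq hp
  have hr : r = 0 := by
    ext k
    exact h _ congr($hpr k) congr($hqr k)
  exact ⟨w, hwN, by rw [← hwr, hr, add_zero], hqw⟩

theorem Subequiv.central_mul_add {a b : H →L[ℂ] H} (haN : a ∈ N) (ha : IsPartialIsometry a)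
    (hFa : F * a = a) (hb : IsSelfAdjoint b) (hFb : F * b = b) (hba : b * a = 0)
    (hz : IsCentralProjIn N z) (h : Subequiv N (z * r) b) :
    Subequiv N (z * (star a * a + r)) F := by
  have hPN := IsProjIn.mul_star_self haN ha
  have haa := ((Subequiv.of_isPartialIsometry haN ha).central_mul hPN.1 hz).of_central_mul hPN hz
  rw [mul_add, add_comm]
  exact (h.add haa hb hPN.2.2 (by rw [← mul_assoc, hba, zero_mul])).mono_right
    (by rw [mul_add, hFb, ← mul_assoc, hFa])

theorem exists_isCentralProjIn_subequiv_of_add_mul_eq (hE : IsProjIn N E) (hF : IsProjIn N F)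
    (hG : IsProjIn N G) (hG' : IsProjIn N G') (hGG' : G * G' = 0) (hG'G : G' * G = 0)
    (hEFG : (E + F) * G = G) (hEFG' : (E + F) * G' = G') :
    ∃ z, IsCentralProjIn N z ∧ Subequiv N ((1 - z) * G) F ∧ Subequiv N (z * G') E := by
  obtain ⟨a, haN, ha, hFa, A, hA, haA, hGA, hFA⟩ := exists_isSupportIsometry_mul_add_eq hF hG
  obtain ⟨b, hbN, hb, hEb, B, hB, hbB, hGB, hEB⟩ := exists_isSupportIsometry_mul_add_eq hE hG'
  have hEA : E * A = A := by
    rw [← add_zero (E * A), ← hFA, ← add_mul, ← hGA, ← mul_assoc, hEFG]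
  have hFB : F * B = B := by
    rw [← zero_add (F * B), ← hEB, ← add_mul, ← hGB, ← mul_assoc, hEFG']
  have hAG' : A * G' = 0 := by
    rw [← (mul_eq_left_iff_mul_eq_right hA.2.2 hG.2.2).2 hGA, mul_assoc, hGG', mul_zero]
  have hBG : B * G = 0 := by
    rw [← (mul_eq_left_iff_mul_eq_right hB.2.2 hG'.2.2).2 hGB, mul_assoc, hG'G, mul_zero]
  have hAb : A * b = 0 := (hb.mul_left_eq_zero_iff A).2 <| by
    rintro _ rfl
    rw [← mul_assoc, (mul_eq_left_iff_mul_eq_right hA.2.2 hE.2.2).2 hEA, hAG']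
  have hBa : B * a = 0 := (ha.mul_left_eq_zero_iff B).2 <| by
    rintro _ rfl
    rw [← mul_assoc, (mul_eq_left_iff_mul_eq_right hB.2.2 hF.2.2).2 hFB, hBG]
  obtain ⟨z, hz, hzA, hzB⟩ := exists_isCentralProjIn_comparison hA hB
  refine ⟨z, hz, ?_, ?_⟩
  · rw [← haA]
    exact .central_mul_add haN ha.isPartialIsometry hFa hB.2.2 hFB hBa hz.one_sub hzA
  · rw [← hbB]
    exact .central_mul_add hbN hb.isPartialIsometry hEb hA.2.2 hEA hAb hz hzB

/-! ### Finite and properly infinite projections -/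

namespace IsFiniteProjIn

theorem of_subequiv (hp : IsProjIn N p) (hpq : Subequiv N p q) (hq : IsFiniteProjIn N q) :
    IsFiniteProjIn N p := by
  refine ⟨hp, fun v hvN hv hvp => ?_⟩
  obtain ⟨w, hwN, hw, hqw⟩ := hpq
  have hqs : star q = q := hq.1.2.2
  have hwp : w * p = w := by rw [← hw, ← mul_assoc, hp.isPartialIsometry hw]
  have hvpv : v * p = v := by rw [← hv, ← mul_assoc, hp.isPartialIsometry hv]
  have hpvv : p * (v * star v) = v * star v :=
    (mul_eq_left_iff_mul_eq_right (.mul_star_self v) hp.2.2).1 hvp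
  have hpv : p * v = v := by rw [← hp.isPartialIsometry hv, ← mul_assoc, hpvv]
  let r := q - w * star w
  have hr : IsProjIn N r := (IsProjIn.mul_star_self hwN (hp.isPartialIsometry hw)).sub hq.1 <| by
    rw [mul_assoc, (star_mul_eq_star_iff hqs).2 hqw]
  have hrw : r * w = 0 := by rw [sub_mul, hqw, hp.isPartialIsometry hw, sub_self]
  have hwr : star w * r = 0 := by rw [star_mul_eq_zero_comm, hr.2.2, hrw]
  have hmul (a b : H →L[ℂ] H) : (w * a * star w + r) * (w * b * star w + r) =
      w * (a * p * b) * star w + r := by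
    rw [add_mul, mul_add, mul_add, hr.2.1, mul_assoc _ (star w) r, hwr, mul_assoc w b,
      ← mul_assoc r w, hrw, zero_mul, mul_zero, add_zero, zero_add, ← hw]
    simp only [mul_assoc]
  have hq_eq : w * p * star w + r = q := by rw [hwp, add_sub_cancel]
  have hstar : star (w * v * star w + r) = w * star v * star w + r := by
    rw [star_add, hr.2.2, star_mul, star_mul, star_star, mul_assoc]
  -- `v` is transported along `w` to `w v w* + (q - w w*)`.
  have hxx := hq.2 (w * v * star w + r)
    (add_mem (mul_mem (mul_mem hwN hvN) (star_mem hwN)) hr.1)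
    (by rw [hstar, hmul, mul_assoc _ p, hpv, hv, hq_eq])
    ((mul_eq_left_iff_mul_eq_right (.mul_star_self _) hqs).2 <| by
      rw [hstar, hmul, hvpv, ← hq_eq, hmul, hp.2.1, hpvv])
  rw [hstar, hmul, hvpv, ← hq_eq] at hxx
  calc v * star v = p * (v * star v) * p := by rw [hpvv, hvp]
    _ = star w * (w * (v * star v) * star w) * w := by simp only [← hw, mul_assoc]
    _ = star w * (w * p * star w) * w := by rw [add_right_cancel hxx]
    _ = p := by rw [hwp, mul_assoc, hp.isPartialIsometry hw, hw]

end IsFiniteProjIn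

/-- Properly infinite projections, in the form: `q` has two orthogonal subprojections equivalent
to `q`. In this encoding `0` is properly infinite. -/
def IsProperlyInfiniteIn (N : VonNeumannAlgebra H) (q : H →L[ℂ] H) : Prop :=
  IsProjIn N q ∧ ∃ u ∈ N, ∃ v ∈ N, star u * u = q ∧ star v * v = q ∧ q * u = u ∧ q * v = v ∧
    star u * v = 0

namespace IsProperlyInfiniteIn

theorem central_mul (hq : IsProperlyInfiniteIn N q) (hz : IsCentralProjIn N z) :
    IsProperlyInfiniteIn N (z * q) := by
  obtain ⟨hqN, u, hu, v, hv, huq, hvq, hqu, hqv, huv⟩ := hq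
  refine ⟨.of_isStarProjection (mul_mem hz.1.1 hqN.1)
    (hz.1.isStarProjection.mul hqN.isStarProjection (hz.commute hqN.1)), z * u,
    mul_mem hz.1.1 hu, z * v, mul_mem hz.1.1 hv, ?_, ?_, ?_, ?_, ?_⟩
  · rw [hz.star_mul hu, hz.mul_mul_mul (star_mem hu), huq]
  · rw [hz.star_mul hv, hz.mul_mul_mul (star_mem hv), hvq]
  · rw [hz.mul_mul_mul hqN.1, hqu]
  · rw [hz.mul_mul_mul hqN.1, hqv]
  · rw [hz.star_mul hu, hz.mul_mul_mul (star_mem hu), huv, mul_zero]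

theorem eq_zero_of_isFiniteProjIn (hq : IsProperlyInfiniteIn N q) (hfin : IsFiniteProjIn N q) :
    q = 0 := by
  obtain ⟨hqN, u, hu, v, -, huq, hvq, hqu, hqv, huv⟩ := hq
  have huu : u * star u = q := hfin.2 u hu huq (by
    rw [mul_assoc, (star_mul_eq_star_iff hqN.2.2).2 hqu])
  rw [← hvq, ← hqv, ← huu, mul_assoc, huv, mul_zero, mul_zero]

end IsProperlyInfiniteIn

/-- A sequence of partial isometries with the same right support and pairwise orthogonal left
supports, as in the first column of an infinite system of matrix units. -/
structure IsMatrixUnitColumn (N : VonNeumannAlgebra H) {ι : Type*} (w : ι → H →L[ℂ] H) : Prop where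
  mem (i : ι) : w i ∈ N
  isPartialIsometry (i : ι) : IsPartialIsometry (w i)
  star_mul_self_eq (i j : ι) : star (w i) * w i = star (w j) * w j
  star_mul_eq_zero {i j : ι} (h : i ≠ j) : star (w i) * w j = 0

theorem exists_isMatrixUnitColumn (hp : IsProjIn N p) (h : ¬IsFiniteProjIn N p) :
    ∃ w : ℕ → H →L[ℂ] H, IsMatrixUnitColumn N w ∧ w 0 ≠ 0 ∧ ∀ n, p * w n = w n := by
  obtain ⟨v, hvN, hv, hvp, hne⟩ : ∃ v ∈ N, star v * v = p ∧ v * star v * p = v * star v ∧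
      v * star v ≠ p := by
    simpa [IsFiniteProjIn, hp] using h
  have hPN := IsProjIn.mul_star_self hvN (hp.isPartialIsometry hv)
  have hpvv : p * (v * star v) = v * star v :=
    (mul_eq_left_iff_mul_eq_right hPN.2.2 hp.2.2).1 hvp
  have hpv : p * v = v := by rw [← hp.isPartialIsometry hv, ← mul_assoc, hpvv]
  -- The images of `p - v v*` under the powers of `v` are orthogonal.
  let D := p - v * star v
  have hD : IsProjIn N D := hPN.sub hp hvp
  have hpD : p * D = D := by rw [mul_sub, hp.2.1, hpvv]
  have hDv : star D * v = 0 := by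
    rw [hD.2.2, sub_mul, hpv, hp.isPartialIsometry hv, sub_self]
  have hw := star_pow_mul_mul_pow_mul (by rw [hv, hpv]) (by rw [hv, hpD]) hDv
  have hwD (n : ℕ) : star (v ^ n * D) * (v ^ n * D) = D := by
    rw [hw, if_pos rfl, hD.2.2, hD.2.1]
  refine ⟨fun n => v ^ n * D, ⟨fun n => mul_mem (pow_mem hvN n) hD.1,
    fun n => hD.isPartialIsometry (hwD n), fun m n => by rw [hwD, hwD],
    fun h => by rw [hw, if_neg h]⟩, ?_, fun n => ?_⟩
  · beta_reduce
    rwa [pow_zero, one_mul, sub_ne_zero, ne_comm]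
  · beta_reduce
    cases n with
    | zero => rw [pow_zero, one_mul, hpD]
    | succ n => rw [pow_succ', mul_assoc v, ← mul_assoc, hpv]

theorem IsMatrixUnitColumn.exists_isPartialIsometry {ι : Type*} {w : ι → H →L[ℂ] H}
    (hw : IsMatrixUnitColumn N w) {f : ι → ι} (hf : f.Injective) :
    ∃ U ∈ N, IsPartialIsometry U ∧ (∀ b, U * b = 0 ↔ ∀ i, star (w i) * b = 0) ∧
      ∀ b, b * U = 0 ↔ ∀ i, b * w (f i) = 0 := by
  have mul_star_mul (i j : ι) : w i * (star (w j) * w j) = w i := by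
    rw [hw.star_mul_self_eq j i, ← mul_assoc, hw.isPartialIsometry]
  have star_mul_mul_star (i j : ι) : star (w j) * w j * star (w i) = star (w i) := by
    rw [← star_inj, star_mul, star_mul, star_star, star_star, mul_star_mul]
  let u (i : ι) : H →L[ℂ] H := w (f i) * star (w i)
  have hu (i : ι) : u i ∈ N ∧ IsPartialIsometry (u i) := by
    refine ⟨mul_mem (hw.mem _) (star_mem (hw.mem i)), ?_⟩
    calc u i * star (u i) * u i = w (f i) * (star (w i) * w i) *
          (star (w (f i)) * w (f i) * star (w i)) := by
          simp only [u, star_mul, star_star, mul_assoc]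
      _ = u i := by rw [mul_star_mul, star_mul_mul_star]
  have hort {i j : ι} (hij : u i ≠ u j) : StarOrthogonal (u i) (u j) := by
    have hij : i ≠ j := ne_of_apply_ne u hij
    constructor
    · rw [star_mul, star_star, mul_assoc, ← mul_assoc (star _), hw.star_mul_eq_zero (hf.ne hij),
        zero_mul, mul_zero]
    · rw [star_mul, star_star, mul_assoc, ← mul_assoc (star _), hw.star_mul_eq_zero hij,
        zero_mul, mul_zero]
  obtain ⟨U, hUN, hU⟩ := exists_isSupportIsometry_of_pairwise_starOrthogonal (S := Set.range u)
    (by rintro _ ⟨i, rfl⟩; exact hu i) (by rintro _ ⟨i, rfl⟩ _ ⟨j, rfl⟩ hij; exact hort hij)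
  refine ⟨U, hUN, hU.isPartialIsometry, fun b => ?_, fun b => ?_⟩
  · simp only [hU.mul_right_eq_zero_iff, Set.forall_mem_range]
    refine forall_congr' fun i => ⟨fun h => ?_, fun h => by rw [mul_assoc, h, mul_zero]⟩
    rw [← star_mul_mul_star i (f i), mul_assoc, mul_assoc, ← mul_assoc (w (f i)), h, mul_zero]
  · simp only [hU.mul_left_eq_zero_iff, Set.forall_mem_range]
    refine forall_congr' fun i => ⟨fun h => ?_, fun h => by rw [← mul_assoc, h, zero_mul]⟩
    rw [← mul_star_mul (f i) i, ← mul_assoc, ← mul_assoc, mul_assoc b, h, zero_mul]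

theorem exists_isProperlyInfiniteIn (hp : IsProjIn N p) (h : ¬IsFiniteProjIn N p) :
    ∃ q ≠ 0, IsProperlyInfiniteIn N q ∧ p * q = q := by
  obtain ⟨w, hw, hw0, hpw⟩ := exists_isMatrixUnitColumn hp h
  -- `U` and `V` move the column to its even and odd terms.
  obtain ⟨U, hUN, hU, hUr, hUl⟩ := hw.exists_isPartialIsometry (f := fun n => 2 * n)
    (fun m n h => by simpa using h)
  obtain ⟨V, hVN, hV, hVr, hVl⟩ := hw.exists_isPartialIsometry (f := fun n => 2 * n + 1)
    (fun m n h => by simpa using h)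
  have hQ := IsProjIn.star_mul_self hUN hU
  have hQw (i : ℕ) : star U * U * w i = w i := by
    have : star (w i) * (star U * U - 1) = 0 := (hUr _).1
      (by rw [mul_sub, ← mul_assoc, hU, mul_one, sub_self]) i
    rwa [mul_sub_one, sub_eq_zero, star_mul_eq_star_iff hQ.2.2] at this
  have hpU : U * p = U := by
    have := (hUr (p - 1)).2 fun i => by
      rw [mul_sub_one, (star_mul_eq_star_iff hp.2.2).2 (hpw i), sub_self]
    rwa [mul_sub_one, sub_eq_zero] at this
  refine ⟨star U * U, fun hQ0 => hw0 ?_, ⟨hQ, U, hUN, V, hVN, rfl,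
    hV.star_mul_self_eq hU fun b => (hVr b).trans (hUr b).symm, ?_, ?_, ?_⟩, ?_⟩
  · rw [← hQw, hQ0, zero_mul]
  · rw [← sub_eq_zero, ← sub_one_mul, hUl]
    exact fun i => by rw [sub_one_mul, hQw, sub_self]
  · rw [← sub_eq_zero, ← sub_one_mul, hVl]
    exact fun i => by rw [sub_one_mul, hQw, sub_self]
  · refine (hVl _).2 fun i => star_mul_eq_zero_comm.1 ((hUl _).2 fun j => ?_)
    exact hw.star_mul_eq_zero (by lia)
  · rw [← mul_assoc, (mul_star_eq_star_iff hp.2.2).2 hpU]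

namespace IsFiniteProjIn

theorem zero : IsFiniteProjIn N 0 := by
  refine ⟨⟨zero_mem N, mul_zero 0, star_zero _⟩, fun v _ hv _ => ?_⟩
  rw [(CStarRing.star_mul_self_eq_zero_iff v).1 hv, zero_mul]

theorem add (hE : IsFiniteProjIn N E) (hF : IsFiniteProjIn N F) (hEF : E * F = 0) :
    IsFiniteProjIn N (E + F) := by
  have hEF' : IsProjIn N (E + F) := .of_isStarProjection (add_mem hE.1.1 hF.1.1)
    (hE.1.isStarProjection.add hF.1.isStarProjection hEF)
  by_contra h
  obtain ⟨q, hq0, hq, hEFq⟩ := exists_isProperlyInfiniteIn hEF' h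
  obtain ⟨hqN, u, hu, v, hv, huq, hvq, hqu, hqv, huv⟩ := id hq
  have hu' := hqN.isPartialIsometry huq
  have hv' := hqN.isPartialIsometry hvq
  obtain ⟨z, hz, hzF, hzE⟩ := exists_isCentralProjIn_subequiv_of_add_mul_eq hE.1 hF.1
    (.mul_star_self hu hu') (.mul_star_self hv hv')
    (by rw [mul_assoc, ← mul_assoc _ v, huv, zero_mul, mul_zero])
    (by rw [mul_assoc, ← mul_assoc _ u, star_mul_eq_zero_comm.1 huv, zero_mul, mul_zero])
    (by rw [← mul_assoc, ← hqu, ← mul_assoc, hEFq])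
    (by rw [← mul_assoc, ← hqv, ← mul_assoc, hEFq])
  have eq_zero {y x f : H →L[ℂ] H} (hy : IsCentralProjIn N y) (hx : x ∈ N) (hxq : star x * x = q)
      (hf : IsFiniteProjIn N f) (hyf : Subequiv N (y * (x * star x)) f) : y * q = 0 := by
    have hyq := hq.central_mul hy
    have hqx := (Subequiv.of_isPartialIsometry hx (hqN.isPartialIsometry hxq)).central_mul
      (mul_mem hx (star_mem hx)) hy
    rw [hxq] at hqx
    exact hyq.eq_zero_of_isFiniteProjIn (.of_subequiv hyq.1 (hqx.trans hyf) hf)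
  refine hq0 ?_
  rw [← sub_add_cancel q (z * q), ← one_sub_mul, eq_zero hz.one_sub hu huq hF hzF,
    eq_zero hz hv hvq hE hzE, add_zero]

theorem mul_star_self (hp : IsFiniteProjIn N p) (huN : u ∈ N)
    (hu : IsPartialIsometry u) (hup : u * p = u) : IsFiniteProjIn N (u * star u) := by
  have h := Subequiv.of_isPartialIsometry (star_mem huN) hu.star
  rw [star_star] at h
  exact .of_subequiv (.mul_star_self huN hu)
    (h.mono_right (by rw [← mul_assoc, (mul_star_eq_star_iff hp.1.2.2).2 hup])) hp

theorem exists_mul_eq_self (hp : IsFiniteProjIn N p) (hx : x ∈ N) (hxp : x * p = x) :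
    ∃ f, IsFiniteProjIn N f ∧ f * x = x := by
  obtain ⟨u, huN, hu⟩ := exists_isSupportIsometry_singleton hx
  exact ⟨u * star u, hp.mul_star_self huN hu.isPartialIsometry
    (hu.mul_right_eq_self fun y hy => by rw [hy, hxp]), hu.leftSupport_mul rfl⟩

theorem exists_mul_eq_self_and_mul_eq_self (hp : IsFiniteProjIn N p) (hq : IsFiniteProjIn N q) :
    ∃ f, IsFiniteProjIn N f ∧ f * p = p ∧ f * q = q := by
  obtain ⟨u, huN, hu⟩ := exists_isSupportIsometry_singleton (mul_mem hp.1.one_sub.1 hq.1.1)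
  have hpu : p * u = 0 := (hu.mul_left_eq_zero_iff p).2 fun y hy => by
    rw [hy, ← mul_assoc, hp.1.isStarProjection.mul_one_sub_self, zero_mul]
  have hup : u * star u * p = 0 := by
    rw [mul_assoc, star_mul_eq_zero_comm.1 (by rw [hp.1.2.2, hpu]), mul_zero]
  have huq : u * star u * q = (1 - p) * q := by
    rw [← hu.leftSupport_mul rfl, one_sub_mul, mul_sub, ← mul_assoc _ p, hup, zero_mul, sub_zero]
  refine ⟨p + u * star u, hp.add (hq.mul_star_self huN hu.isPartialIsometry
    (hu.mul_right_eq_self fun y hy => by rw [hy, mul_assoc, hq.1.2.1]))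
    (by rw [← mul_assoc, hpu, zero_mul]), ?_, ?_⟩
  · rw [add_mul, hp.1.2.1, hup, add_zero]
  · rw [add_mul, huq, ← add_mul, add_sub_cancel, one_mul]

end IsFiniteProjIn

/-! ### The ideal generated by the finite projections -/

/-- The two-sided ideal of `N` generated by its finite projections, before taking the closure;
`compactIdealSpace N` is its closure. -/
def finiteProjIdeal (N : VonNeumannAlgebra H) : Submodule ℂ (H →L[ℂ] H) :=
  Submodule.span ℂ {y : H →L[ℂ] H |
    ∃ a b p : H →L[ℂ] H, a ∈ N ∧ b ∈ N ∧ IsFiniteProjIn N p ∧ y = a * p * b}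

theorem exists_isFiniteProjIn_of_mem_finiteProjIdeal (hx : x ∈ finiteProjIdeal N) :
    ∃ f, IsFiniteProjIn N f ∧ f * x = x ∧ x * f = x := by
  induction hx using Submodule.span_induction with
  | mem x hx =>
    obtain ⟨a, b, p, ha, hb, hp, rfl⟩ := hx
    obtain ⟨f, hf, hfa⟩ := hp.exists_mul_eq_self (mul_mem ha hp.1.1) (by rw [mul_assoc, hp.1.2.1])
    obtain ⟨g, hg, hgb⟩ := hp.exists_mul_eq_self (mul_mem (star_mem hb) hp.1.1)
      (by rw [mul_assoc, hp.1.2.1])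
    have hbg : p * b * g = p * b := by
      rwa [← star_inj, star_mul, star_mul, hp.1.2.2, hg.1.2.2]
    obtain ⟨e, he, hef, heg⟩ := hf.exists_mul_eq_self_and_mul_eq_self hg
    have hge : g * e = g := (mul_eq_left_iff_mul_eq_right hg.1.2.2 he.1.2.2).2 heg
    refine ⟨e, he, ?_, ?_⟩
    · rw [← hfa, ← mul_assoc, ← mul_assoc, hef]
    · rw [mul_assoc a, ← hbg, mul_assoc, mul_assoc, hge]
  | zero => exact ⟨0, .zero, mul_zero 0, zero_mul 0⟩
  | add x y _ _ hx hy =>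
    obtain ⟨f, hf, hfx, hxf⟩ := hx
    obtain ⟨g, hg, hgy, hyg⟩ := hy
    obtain ⟨e, he, hef, heg⟩ := hf.exists_mul_eq_self_and_mul_eq_self hg
    have hfe : f * e = f := (mul_eq_left_iff_mul_eq_right hf.1.2.2 he.1.2.2).2 hef
    have hge : g * e = g := (mul_eq_left_iff_mul_eq_right hg.1.2.2 he.1.2.2).2 heg
    refine ⟨e, he, ?_, ?_⟩
    · rw [← hfx, ← hgy, mul_add, ← mul_assoc, ← mul_assoc, hef, heg]
    · rw [← hxf, ← hyg, add_mul, mul_assoc, mul_assoc, hfe, hge]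
  | smul c x _ hx =>
    obtain ⟨f, hf, hfx, hxf⟩ := hx
    exact ⟨f, hf, by rw [mul_smul_comm, hfx], by rw [smul_mul_assoc, hxf]⟩

theorem exists_isFiniteProjIn_norm_sub_lt (hx : x ∈ compactIdealSpace N) {ε : ℝ} (hε : 0 < ε) :
    ∃ y ∈ compactIdealSpace N, (∃ f, IsFiniteProjIn N f ∧ f * y * f = y) ∧ ‖x - y‖ < ε := by
  obtain ⟨y, hy, hxy⟩ := Metric.mem_closure_iff.1 hx ε hε
  obtain ⟨f, hf, hfy, hyf⟩ := exists_isFiniteProjIn_of_mem_finiteProjIdeal hy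
  exact ⟨y, subset_closure hy, ⟨f, hf, by rw [hfy, hyf]⟩, by rwa [← dist_eq_norm]⟩

section Modulus

open ContinuousLinearMap

variable {T a : H →L[ℂ] H} {s : ℝ}

theorem isFiniteProjIn_of_mem_compactIdealSpace (hT : T ∈ compactIdealSpace N)
    (haT : ∀ k, ‖a k‖ = ‖T k‖) (hs : 0 < s) (hp : IsProjIn N p) (hpa : s • p ≤ a * p) :
    IsFiniteProjIn N p := by
  obtain ⟨F, hF, hTF⟩ := Metric.mem_closure_iff.1 hT s hs
  rw [dist_eq_norm] at hTF
  obtain ⟨f, hf, -, hFf⟩ := exists_isFiniteProjIn_of_mem_finiteProjIdeal hF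
  refine .of_subequiv hp (subequiv_of_forall_apply_eq_zero hp hf.1 fun k hpk hfk => ?_) hf
  have hFk : F k = 0 := by
    rw [← hFf, mul_apply_eq_comp, hfk, map_zero]
  have hle : s * ‖k‖ ≤ ‖T - F‖ * ‖k‖ := calc
    s * ‖k‖ ≤ ‖a k‖ := mul_norm_le_norm_apply hpa hpk
    _ = ‖(T - F) k‖ := by rw [haT, sub_apply, hFk, sub_zero]
    _ ≤ ‖T - F‖ * ‖k‖ := (T - F).le_opNorm k
  by_contra hk
  exact hTF.not_ge (le_of_mul_le_mul_right hle (norm_pos_iff.2 hk))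

theorem mem_compactIdealSpace_of_forall_isFiniteProjIn {e : ℝ → H →L[ℂ] H} (hT : T ∈ N)
    (he : ∀ s, 0 < s → IsFiniteProjIn N (e s) ∧ ‖T - T * e s‖ ≤ s) : T ∈ compactIdealSpace N := by
  refine Metric.mem_closure_iff.2 fun ε hε => ?_
  obtain ⟨hfin, hle⟩ := he (ε / 2) (half_pos hε)
  refine ⟨T * e (ε / 2), Submodule.subset_span ⟨T, 1, e (ε / 2), hT, one_mem N, hfin,
    (mul_one _).symm⟩, ?_⟩
  rw [dist_eq_norm]
  exact hle.trans_lt (half_lt_self hε)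

end Modulus

theorem stmt14_general {N : VonNeumannAlgebra H} {T a : H →L[ℂ] H} (hT : T ∈ N) (ha : 0 ≤ a)
    (ha_sq : a * a = star T * T) {e : ℝ → H →L[ℂ] H}
    (he : ∀ s, 0 < s → IsProjIn N (e s) ∧ Commute (e s) a ∧ s • e s ≤ a * e s ∧
      a * (1 - e s) ≤ s • (1 - e s)) :
    (T ∈ compactIdealSpace N ↔ ∀ s, 0 < s → IsFiniteProjIn N (e s)) ∧
    (∀ S ∈ compactIdealSpace N, ∀ ε : ℝ, 0 < ε → ∃ S' ∈ compactIdealSpace N,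
      (∃ f, IsFiniteProjIn N f ∧ f * S' * f = S') ∧ ‖S - S'‖ < ε) := by
  have haT : ∀ k, ‖a k‖ = ‖T k‖ := star_mul_self_eq_iff_norm_apply_eq.1 <| by
    rw [ha.isSelfAdjoint.star_eq, ha_sq]
  refine ⟨⟨fun hTN s hs => ?_, fun hfin => ?_⟩, fun S hS ε hε =>
    exists_isFiniteProjIn_norm_sub_lt hS hε⟩
  · obtain ⟨hp, -, hpa, -⟩ := he s hs
    exact isFiniteProjIn_of_mem_compactIdealSpace hTN haT hs hp hpa
  · refine mem_compactIdealSpace_of_forall_isFiniteProjIn hT fun s hs => ⟨hfin s hs, ?_⟩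
    obtain ⟨hp, hpa, -, hle⟩ := he s hs
    exact norm_sub_mul_le_of_mul_one_sub_le ha haT hs.le hp.isStarProjection hpa hle

end VonNeumannAlgebra

/-- for a semifinite von Neumann algebra `N` and `T ∈ N` with modulus
`|T| = aT` and spectral projections `e s = e_{[s,∞)}(|T|)` (characterized by:
`e s` is a projection in `N` commuting with `|T|`, with `|T| ≥ s` on its range and
`|T| ≤ s` on the range of its complement), one has `T ∈ J(N)` iff every `e s`,
`s > 0`, is a finite projection.  Consequently, elements supported on finite
projections are norm dense in `J(N)`. -/
theorem stmt14 (N : VonNeumannAlgebra H)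
    (hsemifinite : ∀ p, IsProjIn N p → p ≠ 0 →
        ∃ q, IsFiniteProjIn N q ∧ q ≠ 0 ∧ q * p = q)
    (T : H →L[ℂ] H) (hT : T ∈ N)
    (aT : H →L[ℂ] H) (haT : aT ∈ N)
    (haT_pos : ∃ y : H →L[ℂ] H, y ∈ N ∧ aT = star y * y)
    (haT_sq : aT * aT = star T * T)
    (e : ℝ → H →L[ℂ] H)
    (he : ∀ s : ℝ, 0 < s → IsProjIn N (e s) ∧ Commute (e s) aT ∧
        (∃ y : H →L[ℂ] H, aT * e s - s • e s = star y * y) ∧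
        (∃ y : H →L[ℂ] H, s • (1 - e s) - aT * (1 - e s) = star y * y)) :
    (T ∈ compactIdealSpace N ↔ ∀ s : ℝ, 0 < s → IsFiniteProjIn N (e s)) ∧
    (∀ S ∈ compactIdealSpace N, ∀ ε : ℝ, 0 < ε →
      ∃ S' ∈ compactIdealSpace N,
        (∃ f, IsFiniteProjIn N f ∧ f * S' * f = S') ∧ ‖S - S'‖ < ε) := by
  obtain ⟨y, -, hy⟩ := haT_pos
  exact stmt14_general hT (CStarAlgebra.nonneg_iff_eq_star_mul_self.2 ⟨y, hy⟩) haT_sq <| by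
    simpa only [← CStarAlgebra.nonneg_iff_eq_star_mul_self, sub_nonneg] using he
end
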